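/- arXiv:2303.02089 — 7 statements merged into one kernel-verified Lean document; each statement's English description precedes it below -/
import Mathlib

section
/- Let ξ : X → E be a bounded continuous function such that the restriction of f to the support of ξ is a proper map. Then: (i) for every y ∈ Y the set {x ∈ f⁻¹(y) : ξ(x) ≠ 0} is finite; (ii) the function f_*ξ : Y → E defined by f_*ξ(y) = ∑_{x ∈ f⁻¹(y)} ξ(x) is continuous; and (iii) if ξ has compact support then f_*ξ has compact support. -/
/-!
The part `F` of a fibre `f ⁻¹' {y}` lying in the support of `ξ` is compact by properness and
discrete because `f` is a local homeomorphism, hence finite. Choose pairwise disjoint open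
neighbourhoods of the points of `F`, each inside the domain of a local inverse of `f`. The part of
the support outside these neighbourhoods has closed image, which misses `y`; so for `y'` near `y`
all points of the support over `y'` lie in the chosen neighbourhoods, exactly one candidate in
each. Thus near `y` the fibre sum is the finite sum of `ξ` along the local inverses
(`eventually_finsum_fibre_eq`), which is continuous at `y`. The support of the fibre sum is
contained in the image of the support of `ξ`, which gives the statement on compact supports.
-/

open Set Topology Filter

section

variable {X Y E : Type*} [TopologicalSpace X] [TopologicalSpace Y]

/-- A set on which a local homeomorphism is proper meets each fibre in a finite set:
the intersection is compact and discrete. -/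
lemma finite_fibre_inter [T1Space Y] {f : X → Y} (hf : IsLocalHomeomorph f) {S : Set X}
    (hS : IsProperMap (S.domRestrict f)) (y : Y) : (S ∩ f ⁻¹' {y}).Finite := by
  have hc : IsCompact (S ∩ f ⁻¹' {y}) := by
    have h := (hS.isCompact_preimage (isCompact_singleton (x := y))).image continuous_subtype_val
    rwa [domRestrict_eq, preimage_comp, Subtype.image_preimage_coe] at h
  refine hc.finite ((hf.isLocalHomeomorphOn (s := S ∩ f ⁻¹' {y})).isDiscrete_of_image ?_)
  have hsub : (f '' (S ∩ f ⁻¹' {y})).Subsingleton := by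
    rintro _ ⟨a, ha, rfl⟩ _ ⟨b, hb, rfl⟩
    exact ha.2.trans hb.2.symm
  exact hsub.isDiscrete

/-- If `f` is closed on `S` and the open set `W` contains the part of the fibre over `y` lying in
`S`, then `W` contains the part in `S` of all nearby fibres. -/
lemma eventually_fibre_subset {f : X → Y} {S W : Set X}
    (hS : IsClosedMap (S.domRestrict f)) (hW : IsOpen W) {y : Y}
    (h : S ∩ f ⁻¹' {y} ⊆ W) : ∀ᶠ y' in 𝓝 y, S ∩ f ⁻¹' {y'} ⊆ W := by
  have hcl := hS _ (hW.isClosed_compl.preimage continuous_subtype_val)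
  have hy : y ∈ (S.domRestrict f '' (Subtype.val ⁻¹' Wᶜ))ᶜ := by
    rintro ⟨z, hz, hzy⟩
    exact hz (h ⟨z.2, hzy⟩)
  filter_upwards [hcl.isOpen_compl.mem_nhds hy] with y' hy' z hz
  by_contra hzW
  exact hy' ⟨⟨z, hz.1⟩, hzW, hz.2⟩

/-- Near `y`, the fibre sum of `ξ` is the sum of `ξ` along local inverses of `f` through the
finitely many points of the fibre over `y` lying in the support of `ξ`. -/
lemma eventually_finsum_fibre_eq [T2Space X] [AddCommMonoid E] {f : X → Y} {ξ : X → E}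
    {e : X → OpenPartialHomeomorph X Y} (he : ∀ x, x ∈ (e x).source) (hfe : ∀ x, f = e x)
    (hξ : IsClosedMap ((tsupport ξ).domRestrict f)) {y : Y}
    (hF : (tsupport ξ ∩ f ⁻¹' {y}).Finite) :
    ∀ᶠ y' in 𝓝 y, ∑ᶠ x ∈ f ⁻¹' {y'}, ξ x = ∑ x ∈ hF.toFinset, ξ ((e x).symm y') := by
  classical
  obtain ⟨U, hU, hdisj⟩ := hF.t2_separation
  have hW : IsOpen (⋃ x ∈ tsupport ξ ∩ f ⁻¹' {y}, U x ∩ (e x).source) :=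
    isOpen_biUnion fun x _ => (hU x).2.inter (e x).open_source
  have h1 := eventually_fibre_subset hξ hW (y := y)
    fun x hx => mem_biUnion hx ⟨(hU x).1, he x⟩
  have h2 : ∀ᶠ y' in 𝓝 y, ∀ x ∈ tsupport ξ ∩ f ⁻¹' {y},
      y' ∈ (e x).target ∧ (e x).symm y' ∈ U x := by
    refine (eventually_all_finite hF).2 fun x hx => ?_
    have hy : e x x = y := (congrFun (hfe x) x).symm.trans hx.2
    have ht : y ∈ (e x).target := hy ▸ (e x).map_source (he x)
    have hs : (e x).symm y = x := by rw [← hy, (e x).left_inv (he x)]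
    have hm : ∀ᶠ y' in 𝓝 y, y' ∈ (e x).target := (e x).open_target.mem_nhds ht
    refine hm.and (((e x).symm.continuousAt ht).eventually_mem ((hU x).2.mem_nhds ?_))
    rw [hs]
    exact (hU x).1
  filter_upwards [h1, h2] with w h1 h2
  -- The local inverses through distinct points of the fibre land in disjoint neighbourhoods.
  have hinj : Set.InjOn (fun x => (e x).symm w) (hF.toFinset : Set X) := by
    intro a ha b hb hab
    rw [hF.coe_toFinset] at ha hb
    by_contra hne
    have hab : (e a).symm w = (e b).symm w := hab
    exact disjoint_left.1 (hdisj ha hb hne) (h2 a ha).2 (hab ▸ (h2 b hb).2)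
  rw [← Finset.sum_image (f := ξ) hinj]
  refine finsum_mem_eq_sum_of_subset _ ?_ ?_
  · rintro z ⟨hz, hzξ⟩
    obtain ⟨x, hx, -, hzx⟩ := mem_iUnion₂.1 (h1 ⟨subset_tsupport ξ hzξ, hz⟩)
    have hz' : e x z = w := (congrFun (hfe x) z).symm.trans hz
    exact Finset.mem_coe.2 (Finset.mem_image.2
      ⟨x, hF.mem_toFinset.2 hx, by rw [← hz', (e x).left_inv hzx]⟩)
  · intro z hz
    obtain ⟨x, hx, rfl⟩ := Finset.mem_image.1 (Finset.mem_coe.1 hz)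
    exact (congrFun (hfe x) _).trans ((e x).right_inv (h2 x (hF.mem_toFinset.1 hx)).1)

end

/-- **Sum over fibres lemma.**
Let `X` and `Y` be locally compact Hausdorff spaces, `f : X → Y` a local homeomorphism and
`E` a complex Banach space.  Let `ξ : X → E` be a bounded continuous function such that the
restriction of `f` to the (closed) support of `ξ` is a proper map.  Then:
(i) for every `y ∈ Y` the set `{x ∈ f⁻¹(y) : ξ x ≠ 0}` is finite;
(ii) the function `f_*ξ : Y → E`, `y ↦ ∑_{x ∈ f⁻¹(y)} ξ x`, is continuous;
(iii) if `ξ` has compact support then so does `f_*ξ`. -/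
theorem sum_over_fibres
    {X Y E : Type*} [TopologicalSpace X] [LocallyCompactSpace X] [T2Space X]
    [TopologicalSpace Y] [LocallyCompactSpace Y] [T2Space Y]
    [NormedAddCommGroup E] [NormedSpace ℂ E] [CompleteSpace E]
    (f : X → Y) (hf : IsLocalHomeomorph f)
    (ξ : X → E) (hξcont : Continuous ξ) (hξbdd : ∃ C : ℝ, ∀ x, ‖ξ x‖ ≤ C)
    (hξproper : IsProperMap ((tsupport ξ).restrict f)) :
    (∀ y : Y, {x : X | f x = y ∧ ξ x ≠ 0}.Finite) ∧
    Continuous (fun y : Y => ∑ᶠ x ∈ f ⁻¹' {y}, ξ x) ∧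
    (HasCompactSupport ξ → HasCompactSupport (fun y : Y => ∑ᶠ x ∈ f ⁻¹' {y}, ξ x)) := by
  have hfin : ∀ y, (tsupport ξ ∩ f ⁻¹' {y}).Finite := finite_fibre_inter hf hξproper
  refine ⟨fun y => (hfin y).subset fun x hx => ⟨subset_tsupport ξ hx.2, hx.1⟩, ?_, fun hK => ?_⟩
  · choose e he hfe using hf
    refine continuous_iff_continuousAt.2 fun y => ContinuousAt.congr ?_
      (EventuallyEq.symm (eventually_finsum_fibre_eq he hfe hξproper.isClosedMap (hfin y)))
    refine tendsto_finsetSum _ fun x hx => ?_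
    have hy : e x x = y := (congrFun (hfe x) x).symm.trans ((hfin y).mem_toFinset.1 hx).2
    have ht : y ∈ (e x).target := hy ▸ (e x).map_source (he x)
    exact hξcont.continuousAt.comp ((e x).symm.continuousAt ht)
  · refine HasCompactSupport.intro (hK.isCompact.image hf.continuous) fun y hy => ?_
    refine finsum_mem_eq_zero_of_forall_eq_zero fun x hx => ?_
    by_contra hne
    exact hy ⟨x, subset_tsupport ξ hne, hx⟩
end

section
/- Let U ⊆ Ω be a slice and let η : Ω → A be a continuous function with compact support contained in U. Then for every ω ∈ Ω there is at most one h ∈ H with η(ω • h) ≠ 0; the H-equivariant extension η̃ : Ω → A defined by η̃(ω) = ∑_{h ∈ H} h • η(ω • h) is a well-defined element of Ind_Ω A; and ‖η̃‖ = sup_{ω∈Ω} ‖η(ω)‖. -/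
/-!
The orbit of a point meets the slice `U` at most once, and freeness makes the group element
leading there unique, so the sum defining `η̃ ω` has at most one nonzero term, of norm
`‖η (ω • h)‖` because `H` acts isometrically. This bounds `‖η̃ ω‖` by the supremum of `‖η‖`;
conversely `η̃ ω = η ω` wherever `η ω ≠ 0` (take `h = 1`), so the two suprema agree.

Continuity is where properness enters (`IsFreeProperAction.locallyFinite_support`): for a compact
neighbourhood `N` of a point, the set of pairs `(ω, h)` with `ω ∈ N` and `ω • h` in the support of
`η` is compact, hence only finitely many `h` occur in the discrete group `H`, and the sum is
locally finite. Equivariance is a reindexing of the sum, and `η̃` vanishes outside the preimage of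
the compact set `q (tsupport η)`.
-/

open scoped BoundedContinuousFunction ZeroAtInfty

/-- The orbit relation of a right action `act : Ω → H → Ω`:
`ω ~ ω'` iff `ω' = ω • h` for some `h ∈ H`.  The orbit space `Ω/H` is `Quot (orbitRel act)`,
equipped with the quotient topology, and the quotient map is `Quot.mk (orbitRel act)`. -/
def orbitRel {Ω H : Type*} (act : Ω → H → Ω) : Ω → Ω → Prop :=
  fun ω ω' => ∃ h : H, act ω h = ω'

/-- `act : Ω → H → Ω` is a continuous, free and proper right action of the discrete group `H`
on the space `Ω`. -/
structure IsFreeProperAction {Ω H : Type*} [TopologicalSpace Ω] [TopologicalSpace H] [Group H]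
    (act : Ω → H → Ω) : Prop where
  act_one : ∀ ω, act ω 1 = ω
  act_mul : ∀ ω (h h' : H), act (act ω h) h' = act ω (h * h')
  continuous : Continuous fun p : Ω × H => act p.1 p.2
  free : ∀ ω (h : H), act ω h = ω → h = 1
  proper : IsProperMap fun p : Ω × H => (act p.1 p.2, p.1)

/-- `π : H → A → A` is a left action of the group `H` on the normed space `A` by
complex-linear isometric isomorphisms. -/
structure IsIsometricAction {H A : Type*} [Group H] [NormedAddCommGroup A] [NormedSpace ℂ A]
    (π : H → A → A) : Prop where
  act_one : ∀ a, π 1 a = a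
  act_mul : ∀ (h h' : H) a, π (h * h') a = π h (π h' a)
  map_add : ∀ (h : H) (a b : A), π h (a + b) = π h a + π h b
  map_smul : ∀ (h : H) (c : ℂ) (a : A), π h (c • a) = c • π h a
  norm_map : ∀ (h : H) (a : A), ‖π h a‖ = ‖a‖

/-- The induced Banach space `Ind_Ω A` of an étale correspondence, specialized to a discrete
group `H`: the set of bounded continuous functions `ξ : Ω → A` that are `H`-equivariant
(`ξ (ω • h) = h⁻¹ • ξ ω`) and whose norm function vanishes at infinity relative to the orbit
space `Ω/H`.  It is regarded as a subset of the Banach space `Ω →ᵇ A` of bounded continuous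
functions with the supremum norm. -/
def IndSet {H Ω A : Type*} [Group H] [TopologicalSpace Ω] [NormedAddCommGroup A]
    (act : Ω → H → Ω) (π : H → A → A) : Set (Ω →ᵇ A) :=
  {ξ | (∀ ω (h : H), ξ (act ω h) = π h⁻¹ (ξ ω)) ∧
    ∀ ε : ℝ, 0 < ε → ∃ K : Set (Quot (orbitRel act)), IsCompact K ∧
      ∀ ω, Quot.mk (orbitRel act) ω ∉ K → ‖ξ ω‖ < ε}

theorem mk_act {Ω H : Type*} (act : Ω → H → Ω) (ω : Ω) (h : H) :
    Quot.mk (orbitRel act) (act ω h) = Quot.mk (orbitRel act) ω :=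
  (Quot.sound ⟨h, rfl⟩).symm

section Action

variable {H Ω A : Type*} [Group H] [TopologicalSpace H] [TopologicalSpace Ω]
  [NormedAddCommGroup A] {act : Ω → H → Ω}

theorem IsFreeProperAction.subsingleton_act_mem (hact : IsFreeProperAction act) {U : Set Ω}
    (hU : Set.InjOn (Quot.mk (orbitRel act)) U) (ω : Ω) :
    {h : H | act ω h ∈ U}.Subsingleton := by
  intro h hh k hk
  have e : act ω h = act ω k := hU hh hk ((mk_act act ω h).trans (mk_act act ω k).symm)
  have : h⁻¹ * k = 1 := hact.free (act ω h) _ (by rw [hact.act_mul, mul_inv_cancel_left, e])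
  exact inv_mul_eq_one.mp this

/-- A proper action of a discrete group moves any compact neighbourhood into the compact support
of `η` by only finitely many group elements. -/
theorem IsFreeProperAction.locallyFinite_support [DiscreteTopology H] [LocallyCompactSpace Ω]
    (hact : IsFreeProperAction act) {η : Ω → A} (hη : HasCompactSupport η) :
    LocallyFinite fun h : H => Function.support fun ω => η (act ω h) := by
  intro ω₀
  obtain ⟨N, hN, hN₀⟩ := exists_compact_mem_nhds ω₀
  refine ⟨N, hN₀, ?_⟩
  have hc := hact.proper.isCompact_preimage (hη.isCompact.prod hN)
  refine (hc.image continuous_snd).finite_of_discrete.subset ?_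
  rintro h ⟨ω, hω, hωN⟩
  exact ⟨(ω, h), ⟨subset_tsupport η hω, hωN⟩, rfl⟩

end Action

section Isometric

variable {H A : Type*} [Group H] [NormedAddCommGroup A] [NormedSpace ℂ A] {π : H → A → A}

/-- The isometric linear operator by which a group element acts. -/
def IsIsometricAction.toLinearIsometry (hπ : IsIsometricAction π) (h : H) : A →ₗᵢ[ℂ] A where
  toFun := π h
  map_add' := hπ.map_add h
  map_smul' := hπ.map_smul h
  norm_map' := hπ.norm_map h

theorem IsIsometricAction.map_zero (hπ : IsIsometricAction π) (h : H) : π h 0 = 0 :=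
  (hπ.toLinearIsometry h).map_zero

theorem IsIsometricAction.continuous (hπ : IsIsometricAction π) (h : H) : Continuous (π h) :=
  (hπ.toLinearIsometry h).continuous

end Isometric

/-- Let `U ⊆ Ω` be a slice (an open set on which the quotient map `q` is injective) and let
`η : Ω → A` be continuous with compact support contained in `U`.  Then for every `ω` there is
at most one `h ∈ H` with `η (ω • h) ≠ 0`; the `H`-equivariant extension
`η̃(ω) = ∑_{h ∈ H} h • η(ω • h)` is a well-defined element of `Ind_Ω A`; and
`‖η̃‖ = sup_ω ‖η ω‖`. -/
theorem equivariant_extension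
    {H : Type*} [Group H] [TopologicalSpace H] [DiscreteTopology H]
    {Ω : Type*} [TopologicalSpace Ω] [LocallyCompactSpace Ω] [T2Space Ω]
    {A : Type*} [NormedAddCommGroup A] [NormedSpace ℂ A] [CompleteSpace A]
    (act : Ω → H → Ω) (hact : IsFreeProperAction act)
    (π : H → A → A) (hπ : IsIsometricAction π)
    (U : Set Ω) (hUopen : IsOpen U) (hUslice : Set.InjOn (Quot.mk (orbitRel act)) U)
    (η : Ω → A) (hηcont : Continuous η) (hηcpt : HasCompactSupport η)
    (hηsupp : tsupport η ⊆ U) :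
    (∀ ω : Ω, {h : H | η (act ω h) ≠ 0}.Subsingleton) ∧
    ∃ ζ : Ω →ᵇ A, ζ ∈ IndSet act π ∧
      (∀ ω, ζ ω = ∑ᶠ h : H, π h (η (act ω h))) ∧
      ‖ζ‖ = ⨆ ω : Ω, ‖η ω‖ := by
  have hsub : ∀ ω : Ω, {h : H | η (act ω h) ≠ 0}.Subsingleton := fun ω =>
    (hact.subsingleton_act_mem hUslice ω).anti fun h hh => hηsupp (subset_tsupport η hh)
  have hsupp : ∀ (ω : Ω), (Function.support fun h : H => π h (η (act ω h))) ⊆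
      {h : H | η (act ω h) ≠ 0} := fun ω h hh h0 => hh (by simp only [h0, hπ.map_zero])
  let z : Ω → A := fun ω => ∑ᶠ h : H, π h (η (act ω h))
  have hz_single : ∀ ω h, η (act ω h) ≠ 0 → z ω = π h (η (act ω h)) := fun ω h hh =>
    finsum_eq_single _ h fun k hk => by
      by_contra hne
      exact hk (hsub ω (hsupp ω hne) hh)
  have hz_zero : ∀ ω, (∀ h, η (act ω h) = 0) → z ω = 0 := fun ω h0 => by
    simp only [z, h0, hπ.map_zero, finsum_zero]
  have hz_cont : Continuous z := by
    refine continuous_finsum (fun h => (hπ.continuous h).comp (hηcont.comp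
      (hact.continuous.comp (Continuous.prodMk_left h)))) ?_
    exact (hact.locallyFinite_support hηcpt).subset fun h ω hω => hsupp ω hω
  obtain ⟨C, hC⟩ := hηcpt.exists_bound_of_continuous hηcont
  have hbdd : BddAbove (Set.range fun ω => ‖η ω‖) := ⟨C, by rintro _ ⟨ω, rfl⟩; exact hC ω⟩
  have hz_le : ∀ ω, ‖z ω‖ ≤ ⨆ ω, ‖η ω‖ := by
    intro ω
    by_cases h0 : ∀ h, η (act ω h) = 0
    · rw [hz_zero ω h0, norm_zero]
      exact Real.iSup_nonneg fun _ => norm_nonneg _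
    · obtain ⟨h, hh⟩ := not_forall.mp h0
      rw [hz_single ω h hh, hπ.norm_map]
      exact le_ciSup hbdd (act ω h)
  have hle_z : ∀ ω, ‖η ω‖ ≤ ‖z ω‖ := by
    intro ω
    by_cases h0 : η ω = 0
    · simp [h0]
    · rw [hz_single ω 1 (by rwa [hact.act_one]), hact.act_one, hπ.act_one]
  refine ⟨hsub, BoundedContinuousFunction.ofNormedAddCommGroup z hz_cont _ hz_le,
    ⟨fun ω k => ?_, fun ε hε => ?_⟩, fun _ => rfl, le_antisymm ?_ ?_⟩
  · change z (act ω k) = π k⁻¹ (z ω)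
    have hmap : π k⁻¹ (z ω) = ∑ᶠ h : H, π k⁻¹ (π h (η (act ω h))) :=
      (hπ.toLinearIsometry k⁻¹).toLinearMap.toAddMonoidHom.map_finsum
        ((hsub ω).finite.subset (hsupp ω))
    rw [hmap, ← finsum_comp_equiv (Equiv.mulLeft k)]
    refine finsum_congr fun h => ?_
    rw [Equiv.coe_mulLeft, ← hπ.act_mul, inv_mul_cancel_left, hact.act_mul]
  · refine ⟨Quot.mk (orbitRel act) '' tsupport η, hηcpt.isCompact.image continuous_quot_mk,
      fun ω hω => ?_⟩
    have h0 : z ω = 0 := hz_zero ω fun h => by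
      by_contra hh
      exact hω ⟨act ω h, subset_tsupport η hh, mk_act act ω h⟩
    change ‖z ω‖ < ε
    rwa [h0, norm_zero]
  · exact BoundedContinuousFunction.norm_ofNormedAddCommGroup_le _
      (Real.iSup_nonneg fun _ => norm_nonneg _) hz_le
  · exact Real.iSup_le (fun ω => (hle_z ω).trans
      (BoundedContinuousFunction.norm_coe_le_norm
        (BoundedContinuousFunction.ofNormedAddCommGroup z hz_cont _ hz_le) ω)) (norm_nonneg _)
end

section
/- Suppose 𝒰 is a cover of Ω by slices. Then the linear span of the H-equivariant extensions η̃ (where η̃(ω) = ∑_{h∈H} h • η(ω • h)), taken over all U ∈ 𝒰 and all continuous functions η : Ω → A with compact support contained in U, is dense in Ind_Ω A. -/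
/-!
The element `ξ` of the induced space is approximated by cutting it off upstairs on `Ω` and then
normalizing, so that no partition of unity on the orbit space is needed.

Given `ε`, choose a compact `L ⊆ Ω` whose image in `Ω/H` contains the compact set off which
`‖ξ‖ < ε` (`exists_isCompact_subset_image`; the quotient map is open and `Ω` is locally compact).
Cover `L` by finitely many `U i ∈ 𝒰`, and take compactly supported continuous `u i : Ω → [0, 1]`,
supported in `U i`, with `∑ i, u i = 1` on `L`. By properness the orbit sums
`ũ i ω = ∑ h, u i (ω • h)` are locally finite, hence continuous, and they are `H`-invariant.
Put `s = ∑ i, ũ i`, so that `s ≥ 1` on `L • H`, and `η i = (u i / max s 1) • ξ`. Equivariance of `ξ`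
gives `η̃ i = (ũ i / max s 1) • ξ`, so `∑ i, η̃ i = (s / max s 1) • ξ`. This agrees with `ξ` on
`L • H`, and elsewhere it differs from `ξ` by at most `‖ξ ω‖ < ε`.
-/


open scoped BoundedContinuousFunction ZeroAtInfty

open Set Topology

section Action

variable {H : Type*} [Group H] [TopologicalSpace H] {Ω : Type*} [TopologicalSpace Ω]
  {act : Ω → H → Ω}

lemma orbitRel_equivalence (hact : IsFreeProperAction act) : Equivalence (orbitRel act) where
  refl ω := ⟨1, hact.act_one ω⟩
  symm := by
    rintro ω _ ⟨h, rfl⟩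
    exact ⟨h⁻¹, by rw [hact.act_mul, mul_inv_cancel, hact.act_one]⟩
  trans := by
    rintro ω _ _ ⟨h, rfl⟩ ⟨k, rfl⟩
    exact ⟨h * k, (hact.act_mul ω h k).symm⟩

lemma mk_eq_mk_iff (hact : IsFreeProperAction act) {ω ω' : Ω} :
    Quot.mk (orbitRel act) ω = Quot.mk (orbitRel act) ω' ↔ ∃ h, act ω h = ω' :=
  (orbitRel_equivalence hact).quot_mk_eq_iff ω ω'

lemma continuous_act (hact : IsFreeProperAction act) (h : H) : Continuous fun ω => act ω h :=
  hact.continuous.comp (continuous_id.prodMk continuous_const)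

lemma isOpenMap_mk (hact : IsFreeProperAction act) : IsOpenMap (Quot.mk (orbitRel act)) := by
  intro V hV
  have hpre : Quot.mk (orbitRel act) ⁻¹' (Quot.mk (orbitRel act) '' V)
      = ⋃ h : H, (fun ω => act ω h) ⁻¹' V := by
    ext ω
    simp only [mem_preimage, mem_image, mem_iUnion]
    constructor
    · rintro ⟨v, hv, hvω⟩
      obtain ⟨h, rfl⟩ := (mk_eq_mk_iff hact).1 hvω.symm
      exact ⟨h, hv⟩
    · rintro ⟨h, hh⟩
      exact ⟨_, hh, ((mk_eq_mk_iff hact).2 ⟨h, rfl⟩).symm⟩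
  rw [← isQuotientMap_quot_mk.isOpen_preimage, hpre]
  exact isOpen_iUnion fun h => hV.preimage (continuous_act hact h)

lemma exists_isCompact_subset_image [LocallyCompactSpace Ω] (hact : IsFreeProperAction act)
    {K : Set (Quot (orbitRel act))} (hK : IsCompact K) :
    ∃ L : Set Ω, IsCompact L ∧ K ⊆ Quot.mk (orbitRel act) '' L := by
  choose C hC hCmem using fun ω : Ω => exists_compact_mem_nhds ω
  obtain ⟨t, -, ht⟩ := hK.elim_nhds_subcover (fun y => Quot.mk (orbitRel act) '' C y.out)
    fun y _ => by
      have := (isOpenMap_mk hact).image_mem_nhds (hCmem y.out)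
      rwa [Quot.out_eq] at this
  refine ⟨⋃ y ∈ t, C y.out, t.isCompact_biUnion fun y _ => hC _, ?_⟩
  simpa only [image_iUnion] using ht

/-- Over a compact neighbourhood `N` of a point, only finitely many translates meet the support
of `u`: the pairs `(ω, h)` with `ω ∈ N`, `ω • h ∈ supp u` form a compact set by properness, and its
projection to the discrete space `H` is finite. -/
lemma locallyFinite_support_comp_act [DiscreteTopology H] [LocallyCompactSpace Ω]
    (hact : IsFreeProperAction act) {u : Ω → ℝ} (hu : HasCompactSupport u) :
    LocallyFinite fun h : H => Function.support fun ω => u (act ω h) := by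
  intro ω
  obtain ⟨N, hN, hNω⟩ := exists_compact_mem_nhds ω
  refine ⟨N, hNω, ?_⟩
  have hcpt := hact.proper.isCompact_preimage (hu.isCompact.prod hN)
  refine (isCompact_iff_finite.1 (hcpt.image continuous_snd)).subset ?_
  rintro h ⟨ω', hω', hN'⟩
  exact ⟨(ω', h), ⟨subset_tsupport u hω', hN'⟩, rfl⟩

/-- The function `ω ↦ ∑ h, u (ω • h)`, as a `finsum`; it takes the junk value `0` at points where
infinitely many terms are nonzero, which does not occur for compactly supported `u`. -/
noncomputable def orbitSum (act : Ω → H → Ω) (u : Ω → ℝ) (ω : Ω) : ℝ := ∑ᶠ h : H, u (act ω h)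

lemma continuous_orbitSum [DiscreteTopology H] [LocallyCompactSpace Ω]
    (hact : IsFreeProperAction act) {u : Ω → ℝ} (hc : Continuous u) (hu : HasCompactSupport u) :
    Continuous (orbitSum act u) :=
  continuous_finsum (fun h => hc.comp (continuous_act hact h))
    (locallyFinite_support_comp_act hact hu)

lemma orbitSum_act (hact : IsFreeProperAction act) (u : Ω → ℝ) (ω : Ω) (k : H) :
    orbitSum act u (act ω k) = orbitSum act u ω := by
  simp only [orbitSum, hact.act_mul]
  exact finsum_comp_equiv (Equiv.mulLeft k) (f := fun h => u (act ω h))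

lemma orbitSum_nonneg {u : Ω → ℝ} (h0 : ∀ ω, 0 ≤ u ω) (ω : Ω) : 0 ≤ orbitSum act u ω :=
  finsum_nonneg fun _ => h0 _

lemma le_orbitSum [DiscreteTopology H] [LocallyCompactSpace Ω]
    (hact : IsFreeProperAction act) {u : Ω → ℝ} (hu : HasCompactSupport u) (h0 : ∀ ω, 0 ≤ u ω)
    (ω : Ω) : u ω ≤ orbitSum act u ω := by
  have hfin : Function.HasFiniteSupport fun h : H => u (act ω h) :=
    (locallyFinite_support_comp_act hact hu).point_finite ω
  have := single_le_finsum (1 : H) hfin fun _ => h0 _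
  rwa [hact.act_one] at this

/-- For an equivariant `ξ` and an invariant scalar function `m`, the equivariant extension of
`(u / m) • ξ` is `(ũ / m) • ξ`, with `ũ` the orbit sum of `u`. -/
lemma finsum_cutoff {A : Type*} [NormedAddCommGroup A] [NormedSpace ℂ A]
    {π : H → A → A} (hπ : IsIsometricAction π) {ξ : Ω → A}
    (hξ : ∀ ω (h : H), ξ (act ω h) = π h⁻¹ (ξ ω)) (u m : Ω → ℝ)
    (hm : ∀ ω (h : H), m (act ω h) = m ω) (ω : Ω) :
    ∑ᶠ h : H, π h (((u (act ω h) / m (act ω h) : ℝ) : ℂ) • ξ (act ω h))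
      = ((orbitSum act u ω / m ω : ℝ) : ℂ) • ξ ω := by
  have hterm (h : H) : π h (((u (act ω h) / m (act ω h) : ℝ) : ℂ) • ξ (act ω h))
      = (u (act ω h) * (m ω)⁻¹) • ξ ω := by
    rw [hπ.map_smul, hξ, ← hπ.act_mul, mul_inv_cancel, hπ.act_one, hm, div_eq_mul_inv,
      Complex.coe_smul]
  simp only [hterm]
  rw [← finsum_smul, ← finsum_mul, Complex.coe_smul, div_eq_mul_inv]
  rfl

end Action

/-- If `𝒰` is a cover of `Ω` by slices, then the linear span of the `H`-equivariant extensions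
`η̃` (where `η̃(ω) = ∑_{h∈H} h • η(ω • h)`), over all `U ∈ 𝒰` and all continuous `η : Ω → A`
with compact support contained in `U`, is dense in `Ind_Ω A`. -/
theorem equivariant_extensions_dense
    {H : Type*} [Group H] [TopologicalSpace H] [DiscreteTopology H]
    {Ω : Type*} [TopologicalSpace Ω] [LocallyCompactSpace Ω] [T2Space Ω]
    {A : Type*} [NormedAddCommGroup A] [NormedSpace ℂ A] [CompleteSpace A]
    (act : Ω → H → Ω) (hact : IsFreeProperAction act)
    (π : H → A → A) (hπ : IsIsometricAction π)
    (𝒰 : Set (Set Ω)) (h𝒰open : ∀ U ∈ 𝒰, IsOpen U)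
    (h𝒰slice : ∀ U ∈ 𝒰, Set.InjOn (Quot.mk (orbitRel act)) U)
    (h𝒰cover : ⋃₀ 𝒰 = Set.univ) :
    IndSet act π ⊆ closure (Submodule.span ℂ
      {ζ : Ω →ᵇ A | ∃ U ∈ 𝒰, ∃ η : Ω → A, Continuous η ∧ HasCompactSupport η ∧
        tsupport η ⊆ U ∧ ∀ ω, ζ ω = ∑ᶠ h : H, π h (η (act ω h))} : Set (Ω →ᵇ A)) := by
  rintro ξ ⟨hξ, hvan⟩
  rw [Metric.mem_closure_iff]
  intro ε hε
  obtain ⟨K, hK, hKξ⟩ := hvan (ε / 2) (half_pos hε)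
  obtain ⟨L, hL, hKL⟩ := exists_isCompact_subset_image hact hK
  obtain ⟨t, ht⟩ := hL.elim_finite_subcover (fun U : 𝒰 => (U : Set Ω)) (fun U => h𝒰open U U.2)
    (by rw [← sUnion_eq_iUnion, h𝒰cover]; exact subset_univ L)
  obtain ⟨u, hu_supp, hu_sum, hu_mem, hu_cpt⟩ := exists_continuous_sum_one_of_isOpen_isCompact
    (s := fun i : Fin t.card => ((t.equivFin.symm i : 𝒰) : Set Ω))
    (fun i => h𝒰open _ (t.equivFin.symm i : 𝒰).2) hL (by
      intro ω hω
      obtain ⟨U, hUt, hωU⟩ := mem_iUnion₂.1 (ht hω)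
      exact mem_iUnion.2 ⟨t.equivFin ⟨U, hUt⟩, by simpa using hωU⟩)
  set v : Fin t.card → Ω → ℝ := fun i => orbitSum act (u i) with hv
  have hv_cont (i) : Continuous (v i) := continuous_orbitSum hact (u i).continuous (hu_cpt i)
  have hv_nonneg (i ω) : 0 ≤ v i ω := orbitSum_nonneg (fun ω => (hu_mem i ω).1) ω
  set s : Ω → ℝ := fun ω => ∑ i, v i ω with hs
  have hs_cont : Continuous s := continuous_finsetSum _ fun i _ => hv_cont i
  have hs_act (ω) (h : H) : s (act ω h) = s ω := by
    simp only [hs, hv, orbitSum_act hact]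
  have hs_nonneg (ω) : 0 ≤ s ω := Finset.sum_nonneg fun i _ => hv_nonneg i ω
  have hs_one (ω) (hω : ω ∈ L) : 1 ≤ s ω := by
    have h1 : ∑ i, u i ω = 1 := by simpa using hu_sum hω
    rw [← h1]
    exact Finset.sum_le_sum fun i _ => le_orbitSum hact (hu_cpt i) (fun ω => (hu_mem i ω).1) ω
  set m : Ω → ℝ := fun ω => max (s ω) 1 with hm
  have hm_cont : Continuous m := hs_cont.max continuous_const
  have hm_pos (ω) : 0 < m ω := lt_max_of_lt_right one_pos
  have hm_act (ω) (h : H) : m (act ω h) = m ω := by simp only [hm, hs_act]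
  have hcoef_cont {f : Ω → ℝ} (hf : Continuous f) :
      Continuous fun ω => ((f ω / m ω : ℝ) : ℂ) • ξ ω :=
    (Complex.continuous_ofReal.comp (hf.div hm_cont fun ω => (hm_pos ω).ne')).smul ξ.continuous
  have hbound (i ω) : ‖((v i ω / m ω : ℝ) : ℂ) • ξ ω‖ ≤ ‖ξ‖ := by
    have hle : v i ω / m ω ≤ 1 := (div_le_one (hm_pos ω)).2 <|
      (Finset.single_le_sum (fun j _ => hv_nonneg j ω) (Finset.mem_univ i)).trans (le_max_left _ _)
    rw [norm_smul, Complex.norm_real, Real.norm_of_nonneg (div_nonneg (hv_nonneg i ω) (hm_pos ω).le)]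
    exact (mul_le_of_le_one_left (norm_nonneg _) hle).trans (ξ.norm_coe_le_norm ω)
  let ζ : Fin t.card → Ω →ᵇ A := fun i =>
    BoundedContinuousFunction.ofNormedAddCommGroup _ (hcoef_cont (hv_cont i)) ‖ξ‖ (hbound i)
  refine ⟨∑ i, ζ i, Submodule.sum_mem _ fun i _ => Submodule.subset_span ?_, ?_⟩
  · have hsupp : Function.support (fun ω => ((u i ω / m ω : ℝ) : ℂ) • ξ ω)
        ⊆ Function.support (u i) := by
      intro ω hω hu0
      exact hω (by simp [hu0])
    exact ⟨_, (t.equivFin.symm i : 𝒰).2, fun ω => ((u i ω / m ω : ℝ) : ℂ) • ξ ω,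
      hcoef_cont (u i).continuous, (hu_cpt i).mono hsupp,
      (closure_mono hsupp).trans (hu_supp i),
      fun ω => (finsum_cutoff hπ hξ (u i) m hm_act ω).symm⟩
  · refine lt_of_le_of_lt ((BoundedContinuousFunction.dist_le (half_pos hε).le).2 fun ω => ?_)
      (half_lt_self hε)
    have hsum : (∑ i, ζ i) ω = (s ω / m ω) • ξ ω := by
      have hζ (i) : ζ i ω = (v i ω / m ω) • ξ ω := Complex.coe_smul _ _
      rw [BoundedContinuousFunction.sum_apply]
      simp only [hζ, hs]
      rw [← Finset.sum_smul, Finset.sum_div]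
    rw [hsum, dist_eq_norm]
    by_cases hω : Quot.mk (orbitRel act) ω ∈ K
    · obtain ⟨l, hl, hlω⟩ := hKL hω
      obtain ⟨h, rfl⟩ := (mk_eq_mk_iff hact).1 hlω
      have h1 : m (act l h) = s (act l h) := max_eq_left (by rw [hs_act]; exact hs_one l hl)
      rw [← h1, div_self (hm_pos _).ne', one_smul, sub_self, norm_zero]
      exact (half_pos hε).le
    · have h0 : 0 ≤ s ω / m ω := div_nonneg (hs_nonneg ω) (hm_pos ω).le
      have h1 : s ω / m ω ≤ 1 := (div_le_one (hm_pos ω)).2 (le_max_left _ _)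
      have h2 : ξ ω - (s ω / m ω) • ξ ω = (1 - s ω / m ω) • ξ ω := by rw [sub_smul, one_smul]
      rw [h2, norm_smul, Real.norm_of_nonneg (sub_nonneg.2 h1)]
      exact (mul_le_of_le_one_left (norm_nonneg _) (by linarith)).trans (hKξ ω hω).le
end

section
/- For all ξ, η ∈ Ind_Ω E and all ν ∈ Ind_Ω B: (i) the function ω ↦ ⟨ξ(ω), η(ω)⟩ belongs to Ind_Ω B; (ii) the function ω ↦ ξ(ω) · ν(ω) belongs to Ind_Ω E; (iii) the supremum norm of the function ω ↦ ⟨ξ(ω), ξ(ω)⟩ equals ‖ξ‖², so these pointwise operations make Ind_Ω E an inner-product module over Ind_Ω B whose inner-product norm coincides with the supremum norm. -/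
/-!
Both pointwise operations are biadditive, `H`-equivariant and satisfy a bound
`‖m x y‖ ≤ C * ‖x‖ * ‖y‖`.  Any such operation is jointly continuous, so it carries a pair of
bounded continuous equivariant functions vanishing at infinity on `Ω/H` to another such function
(`exists_mem_indSet_of_biadditive`); this gives (i) and (ii).  For the module action the bound
with `C = 1` is immediate from `⟨e b, e b⟩ = b* ⟨e, e⟩ b`.

The bound for the inner product is obtained with the non-optimal constant `C = 2`; the inner product
is not assumed to be positive or complex linear, so the usual Cauchy–Schwarz argument is replaced
by the following one.  Put `a = ⟨e, f⟩` and `g = f · (t a*)` with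
`t` real.  Then `⟨e, g⟩ = t a a*` is self-adjoint, so polarization reads
`4 t a a* = ⟨e + g, e + g⟩ - ⟨e - g, e - g⟩`, whence `4 t ‖a‖² ≤ 2 (‖e‖ + t ‖f‖ ‖a‖)²`; the choice
`t = ‖e‖ / (‖f‖ ‖a‖)` yields `‖a‖ ≤ 2 ‖e‖ ‖f‖`.

Finally (iii) is the identity `‖⟨e, e⟩‖ = ‖e‖²` together with the fact that squaring commutes
with suprema of nonnegative reals.
-/

open scoped BoundedContinuousFunction ZeroAtInfty

theorem continuous_of_biadditive_of_bound {X Y Z : Type*} [NormedAddCommGroup X]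
    [NormedAddCommGroup Y] [NormedAddCommGroup Z] (m : X → Y → Z)
    (hl : ∀ x x' y, m (x + x') y = m x y + m x' y)
    (hr : ∀ x y y', m x (y + y') = m x y + m x y')
    (C : ℝ) (hb : ∀ x y, ‖m x y‖ ≤ C * ‖x‖ * ‖y‖) :
    Continuous fun p : X × Y => m p.1 p.2 := by
  rw [continuous_iff_continuousAt]
  rintro ⟨x₀, y₀⟩
  rw [ContinuousAt, tendsto_iff_norm_sub_tendsto_zero]
  have key : ∀ p : X × Y, ‖m p.1 p.2 - m x₀ y₀‖ ≤
      C * ‖p.1 - x₀‖ * ‖p.2‖ + C * ‖x₀‖ * ‖p.2 - y₀‖ := by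
    rintro ⟨x, y⟩
    have h1 := hl (x - x₀) x₀ y
    have h2 := hr x₀ (y - y₀) y₀
    rw [sub_add_cancel] at h1 h2
    have h3 : m x y - m x₀ y₀ = m (x - x₀) y + m x₀ (y - y₀) := by
      rw [h1, h2]; abel
    simp only [h3]
    exact (norm_add_le _ _).trans (add_le_add (hb _ _) (hb _ _))
  refine squeeze_zero (fun _ => norm_nonneg _) key ?_
  have hc : Continuous fun p : X × Y =>
      C * ‖p.1 - x₀‖ * ‖p.2‖ + C * ‖x₀‖ * ‖p.2 - y₀‖ := by fun_prop
  simpa using hc.tendsto (x₀, y₀)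

/-- A bounded biadditive equivariant operation, applied pointwise, maps induced spaces to an
induced space. -/
theorem exists_mem_indSet_of_biadditive {H Ω X Y Z : Type*} [Group H] [TopologicalSpace Ω]
    [NormedAddCommGroup X] [NormedAddCommGroup Y] [NormedAddCommGroup Z]
    (act : Ω → H → Ω) (πX : H → X → X) (πY : H → Y → Y) (πZ : H → Z → Z) (m : X → Y → Z)
    (hl : ∀ x x' y, m (x + x') y = m x y + m x' y)
    (hr : ∀ x y y', m x (y + y') = m x y + m x y')
    (C : ℝ) (hC : 0 ≤ C) (hb : ∀ x y, ‖m x y‖ ≤ C * ‖x‖ * ‖y‖)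
    (hπ : ∀ h x y, m (πX h x) (πY h y) = πZ h (m x y))
    (ξ : Ω →ᵇ X) (η : Ω →ᵇ Y) (hξ : ξ ∈ IndSet act πX) (hη : η ∈ IndSet act πY) :
    ∃ β ∈ IndSet act πZ, ∀ ω, β ω = m (ξ ω) (η ω) := by
  have hcont : Continuous fun ω => m (ξ ω) (η ω) :=
    (continuous_of_biadditive_of_bound m hl hr C hb).comp
      (ξ.continuous.prodMk η.continuous)
  have hbη : ∀ ω, ‖m (ξ ω) (η ω)‖ ≤ C * ‖ξ ω‖ * ‖η‖ := fun ω =>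
    (hb _ _).trans (mul_le_mul_of_nonneg_left (η.norm_coe_le_norm ω) (by positivity))
  have hbound : ∀ ω, ‖m (ξ ω) (η ω)‖ ≤ C * ‖ξ‖ * ‖η‖ := fun ω =>
    (hbη ω).trans (by gcongr; exact ξ.norm_coe_le_norm ω)
  refine ⟨BoundedContinuousFunction.ofNormedAddCommGroup _ hcont _ hbound, ⟨?_, ?_⟩,
    fun _ => rfl⟩
  · intro ω h
    simp only [BoundedContinuousFunction.coe_ofNormedAddCommGroup]
    rw [hξ.1, hη.1, hπ]
  · intro ε hε
    -- The summand `1` keeps the denominator nonzero when `C * ‖η‖ = 0`.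
    have hD : 0 < C * ‖η‖ + 1 := by positivity
    obtain ⟨K, hK, hKξ⟩ := hξ.2 (ε / (C * ‖η‖ + 1)) (by positivity)
    refine ⟨K, hK, fun ω hω => ?_⟩
    have h1 := hKξ ω hω
    rw [lt_div_iff₀ hD] at h1
    have h2 : ‖m (ξ ω) (η ω)‖ ≤ C * ‖ξ ω‖ * ‖η‖ := hbη ω
    simp only [BoundedContinuousFunction.coe_ofNormedAddCommGroup]
    nlinarith [norm_nonneg (ξ ω)]

/-- A Cauchy–Schwarz type estimate for a biadditive inner product which is not assumed to be
positive or complex linear, from polarization at the pair `e`, `f · (t ⟨e, f⟩*)` with `t` real. -/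
theorem norm_ip_le_two_mul {B : Type*} [NonUnitalNormedRing B] [StarRing B] [CStarRing B]
    [NormedSpace ℂ B] [SMulCommClass ℂ B B] [StarModule ℂ B]
    {E : Type*} [NormedAddCommGroup E] (smulB : E → B → E) (ip : E → E → B)
    (hr : ∀ e f g : E, ip e (f + g) = ip e f + ip e g)
    (hl : ∀ e f g : E, ip (e + f) g = ip e g + ip f g)
    (h_ip_smulB : ∀ (e f : E) (b : B), ip e (smulB f b) = ip e f * b)
    (h_ip_star : ∀ e f : E, star (ip e f) = ip f e)
    (hsq : ∀ e : E, ‖ip e e‖ = ‖e‖ ^ 2)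
    (hsmul : ∀ (e : E) (b : B), ‖smulB e b‖ ≤ 1 * ‖e‖ * ‖b‖) (e f : E) :
    ‖ip e f‖ ≤ 2 * ‖e‖ * ‖f‖ := by
  have hr0 : ∀ x, ip x 0 = 0 := fun x => by simpa using hr x 0 0
  have hl0 : ∀ x, ip 0 x = 0 := fun x => by simpa using hl 0 0 x
  rcases eq_or_ne e 0 with rfl | he
  · simp [hl0]
  rcases eq_or_ne f 0 with rfl | hf
  · simp [hr0]
  rcases eq_or_ne (ip e f) 0 with ha | ha
  · rw [ha, norm_zero]; positivity
  have hepos := norm_pos_iff.2 he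
  have hfpos := norm_pos_iff.2 hf
  have hapos := norm_pos_iff.2 ha
  set a := ip e f with ha_def
  -- This `t` balances the two terms: `t * ‖f‖ * ‖a‖ = ‖e‖`.
  obtain ⟨t, ht⟩ : ∃ t : ℝ, t = ‖e‖ / (‖f‖ * ‖a‖) := ⟨_, rfl⟩
  have htpos : 0 < t := by rw [ht]; positivity
  have hte : t * (‖f‖ * ‖a‖) = ‖e‖ := by rw [ht]; field_simp
  obtain ⟨g, hg⟩ : ∃ g, g = smulB f ((t : ℂ) • star a) := ⟨_, rfl⟩
  have hgn : ‖g‖ ≤ ‖e‖ := by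
    have h := hsmul f ((t : ℂ) • star a)
    rw [← hg, norm_smul, norm_star, Complex.norm_real, Real.norm_of_nonneg htpos.le] at h
    calc ‖g‖ ≤ _ := h
      _ = t * (‖f‖ * ‖a‖) := by ring
      _ = ‖e‖ := hte
  have heg : ip e g = (t : ℂ) • (a * star a) := by
    rw [hg, h_ip_smulB, mul_smul_comm]
  have hge : ip g e = (t : ℂ) • (a * star a) := by
    rw [← h_ip_star, heg, star_smul, star_mul, star_star]
    simp
  have hrn : ∀ x y, ip x (-y) = -ip x y := fun x y => by
    rw [eq_neg_iff_add_eq_zero, ← hr]; simp [hr0]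
  have hln : ∀ x y, ip (-x) y = -ip x y := fun x y => by
    rw [eq_neg_iff_add_eq_zero, ← hl]; simp [hl0]
  have hpol : (4 : ℂ) • (t : ℂ) • (a * star a) = ip (e + g) (e + g) - ip (e + -g) (e + -g) := by
    simp only [hr, hl, hrn, hln, heg, hge]
    module
  have h1 : 4 * (t * (‖a‖ * ‖a‖)) ≤ ‖e + g‖ ^ 2 + ‖e + -g‖ ^ 2 := by
    rw [← hsq, ← hsq, ← CStarRing.norm_self_mul_star]
    calc 4 * (t * ‖a * star a‖) = ‖(4 : ℂ) • (t : ℂ) • (a * star a)‖ := by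
          rw [norm_smul, norm_smul, Complex.norm_real, Real.norm_of_nonneg htpos.le]; norm_num
      _ ≤ _ := by rw [hpol]; exact norm_sub_le _ _
  have h2 : ‖e + g‖ ≤ 2 * ‖e‖ := (norm_add_le _ _).trans (by linarith)
  have h3 : ‖e + -g‖ ≤ 2 * ‖e‖ := (norm_add_le _ _).trans (by rw [norm_neg]; linarith)
  have h4 : t * (‖a‖ * ‖a‖) ≤ 2 * ‖e‖ ^ 2 := by
    have := pow_le_pow_left₀ (norm_nonneg _) h2 2
    have := pow_le_pow_left₀ (norm_nonneg _) h3 2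
    nlinarith
  have h5 : ‖e‖ * ‖a‖ ≤ ‖e‖ * (2 * ‖e‖ * ‖f‖) := by
    calc ‖e‖ * ‖a‖ = t * (‖a‖ * ‖a‖) * ‖f‖ := by rw [← hte]; ring
      _ ≤ 2 * ‖e‖ ^ 2 * ‖f‖ := by gcongr
      _ = _ := by ring
  exact le_of_mul_le_mul_left h5 hepos

/-- **Induced Hilbert module operations.**  Let `B` be a C*-algebra with an action of `H` by
⋆-automorphisms `πB`, and let `E` be a Hilbert `B`-module (right `B`-module `smulB`,
`B`-valued inner product `ip`, with `‖e‖ = ‖⟨e,e⟩‖^{1/2}`) carrying a compatible `H`-action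
`πE` by isometric linear bijections.  Then for all `ξ, η ∈ Ind_Ω E` and `ν ∈ Ind_Ω B`:
(i) `ω ↦ ⟨ξ(ω), η(ω)⟩` belongs to `Ind_Ω B`;
(ii) `ω ↦ ξ(ω) · ν(ω)` belongs to `Ind_Ω E`;
(iii) `sup_ω ‖⟨ξ(ω), ξ(ω)⟩‖ = ‖ξ‖²`, so the pointwise operations make `Ind_Ω E` an
inner-product module over `Ind_Ω B` whose inner-product norm is the supremum norm. -/
theorem indSet_hilbert_module_operations
    {H : Type*} [Group H] [TopologicalSpace H] [DiscreteTopology H]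
    {Ω : Type*} [TopologicalSpace Ω] [LocallyCompactSpace Ω] [T2Space Ω]
    {B : Type*} [NonUnitalNormedRing B] [StarRing B] [CStarRing B] [NormedSpace ℂ B]
    [IsScalarTower ℂ B B] [SMulCommClass ℂ B B] [StarModule ℂ B] [CompleteSpace B]
    {E : Type*} [NormedAddCommGroup E] [NormedSpace ℂ E] [CompleteSpace E]
    (act : Ω → H → Ω) (hact : IsFreeProperAction act)
    -- the action of `H` on `B` by ⋆-automorphisms
    (πB : H → B → B)
    (hπB1 : ∀ b, πB 1 b = b)
    (hπBmul : ∀ (h h' : H) b, πB (h * h') b = πB h (πB h' b))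
    (hπBadd : ∀ (h : H) (a b : B), πB h (a + b) = πB h a + πB h b)
    (hπBsmul : ∀ (h : H) (c : ℂ) (b : B), πB h (c • b) = c • πB h b)
    (hπBmul' : ∀ (h : H) (a b : B), πB h (a * b) = πB h a * πB h b)
    (hπBstar : ∀ (h : H) (b : B), πB h (star b) = star (πB h b))
    -- the right `B`-module structure on `E`
    (smulB : E → B → E)
    (h_add_smul : ∀ (e f : E) (b : B), smulB (e + f) b = smulB e b + smulB f b)
    (h_smul_add : ∀ (e : E) (b b' : B), smulB e (b + b') = smulB e b + smulB e b')
    (h_smul_mul : ∀ (e : E) (b b' : B), smulB (smulB e b) b' = smulB e (b * b'))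
    (h_smul_csmul : ∀ (c : ℂ) (e : E) (b : B), smulB (c • e) b = c • smulB e b)
    -- the `B`-valued inner product on `E`
    (ip : E → E → B)
    (h_ip_add : ∀ e f g : E, ip e (f + g) = ip e f + ip e g)
    (h_ip_smulB : ∀ (e f : E) (b : B), ip e (smulB f b) = ip e f * b)
    (h_ip_star : ∀ e f : E, star (ip e f) = ip f e)
    (h_ip_norm : ∀ e : E, ‖e‖ = Real.sqrt ‖ip e e‖)
    -- the compatible action of `H` on `E`
    (πE : H → E → E) (hπE : IsIsometricAction πE)
    (hπE_smulB : ∀ (h : H) (e : E) (b : B), πE h (smulB e b) = smulB (πE h e) (πB h b))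
    (hπE_ip : ∀ (h : H) (e f : E), ip (πE h e) (πE h f) = πB h (ip e f)) :
    (∀ ξ η : Ω →ᵇ E, ξ ∈ IndSet act πE → η ∈ IndSet act πE →
      ∃ β ∈ IndSet act πB, ∀ ω, β ω = ip (ξ ω) (η ω)) ∧
    (∀ (ξ : Ω →ᵇ E) (ν : Ω →ᵇ B), ξ ∈ IndSet act πE → ν ∈ IndSet act πB →
      ∃ ζ ∈ IndSet act πE, ∀ ω, ζ ω = smulB (ξ ω) (ν ω)) ∧
    (∀ ξ : Ω →ᵇ E, ξ ∈ IndSet act πE →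
      (⨆ ω : Ω, ‖ip (ξ ω) (ξ ω)‖) = ‖ξ‖ ^ 2) := by
  have hl : ∀ e f g : E, ip (e + f) g = ip e g + ip f g := fun e f g => by
    rw [← h_ip_star g (e + f), h_ip_add, star_add, h_ip_star, h_ip_star]
  have hsq : ∀ e : E, ‖ip e e‖ = ‖e‖ ^ 2 := fun e => by
    rw [h_ip_norm e, Real.sq_sqrt (norm_nonneg _)]
  have hsmul : ∀ (e : E) (b : B), ‖smulB e b‖ ≤ 1 * ‖e‖ * ‖b‖ := fun e b => by
    have h : ip (smulB e b) (smulB e b) = star b * ip e e * b := by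
      rw [h_ip_smulB, ← h_ip_star e (smulB e b), h_ip_smulB, star_mul, h_ip_star]
    refine le_of_sq_le_sq ?_ (by positivity)
    calc ‖smulB e b‖ ^ 2 = ‖star b * ip e e * b‖ := by rw [← hsq, h]
      _ ≤ ‖star b‖ * ‖ip e e‖ * ‖b‖ :=
        (norm_mul_le _ _).trans (by gcongr; exact norm_mul_le _ _)
      _ = (1 * ‖e‖ * ‖b‖) ^ 2 := by rw [hsq, norm_star]; ring
  have hip := norm_ip_le_two_mul smulB ip h_ip_add hl h_ip_smulB h_ip_star hsq hsmul
  refine ⟨fun ξ η hξ hη => ?_, fun ξ ν hξ hν => ?_, fun ξ _ => ?_⟩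
  · exact exists_mem_indSet_of_biadditive act πE πE πB ip hl h_ip_add 2 (by norm_num) hip
      hπE_ip ξ η hξ hη
  · exact exists_mem_indSet_of_biadditive act πE πB πE smulB h_add_smul h_smul_add 1
      (by norm_num) hsmul (fun h x y => (hπE_smulB h x y).symm) ξ ν hξ hν
  · simp only [hsq]
    have hle : ∀ ω, ‖ξ ω‖ ^ 2 ≤ ‖ξ‖ ^ 2 := fun ω =>
      pow_le_pow_left₀ (norm_nonneg _) (ξ.norm_coe_le_norm ω) 2
    -- `Real.iSup_le` and `Real.iSup_nonneg` also cover an empty `Ω`, where both sides are `0`.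
    refine le_antisymm (Real.iSup_le hle (by positivity)) ?_
    have h0 : 0 ≤ ⨆ ω, ‖ξ ω‖ ^ 2 := Real.iSup_nonneg fun ω => by positivity
    rw [← Real.le_sqrt (norm_nonneg _) h0]
    refine (BoundedContinuousFunction.norm_le (Real.sqrt_nonneg _)).2 fun ω => ?_
    exact Real.le_sqrt_of_sq_le (le_ciSup (f := fun ω => ‖ξ ω‖ ^ 2)
      ⟨‖ξ‖ ^ 2, by rintro _ ⟨ω, rfl⟩; exact hle ω⟩ ω)
end

section
/- A map ξ : Z → Ind_Ω A is continuous (for the supremum-norm topology on Ind_Ω A) if and only if for every compactly supported continuous function γ : Z → ℝ the map (z, ω) ↦ γ(z) · ξ(z)(ω) from Z × Ω to A is continuous and, for every ε > 0, there is a compact set L ⊆ Z × (Ω/H) such that ‖γ(z) ξ(z)(ω)‖ < ε whenever (z, q(ω)) ∉ L. -/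
/-!
Write `q : Ω → Ω/H` for the quotient map.

If `ξ` is continuous, the products `γ z • ξ z ω` are jointly continuous because evaluation
`(f, ω) ↦ f ω` is. On a compact set of parameters `z`, finitely many compact subsets of `Ω/H`,
one for each member of a finite cover, make all the `ξ z` uniformly small off their union
(`exists_compact_norm_lt_of_continuous`); the set `L` is the product of
the support of `γ` with this union.

Conversely, fix `z₀` and choose `γ` equal to `1` near `z₀`. The projection `K` to `Ω/H` of the
compact set `L` has the property that `ξ z ω` and `ξ z₀ ω` are both small when `z` is near
`z₀` and `q ω ∉ K`.
Over `K`, the function `ω ↦ ‖ξ z ω - ξ z₀ ω‖` is constant on orbits (equivariance and isometry),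
so, as `q` is open, joint continuity and compactness of `K` make it small uniformly for `z` near
`z₀` (`eventually_forall_lt_of_isCompact`).
-/

open scoped BoundedContinuousFunction ZeroAtInfty

/-- The orbit map is open: the saturation of an open set `V` is the union of its translates,
each of which is open because every group element acts by a continuous map. -/
lemma isOpenMap_quotMk_orbitRel {H Ω : Type*} [Group H] [TopologicalSpace H]
    [TopologicalSpace Ω] {act : Ω → H → Ω} (hact : IsFreeProperAction act) :
    IsOpenMap (Quot.mk (orbitRel act)) := by
  intro V hV
  have hsat : Quot.mk (orbitRel act) ⁻¹' (Quot.mk (orbitRel act) '' V)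
      = ⋃ h : H, (fun ω => act ω h) ⁻¹' V := by
    ext ω
    simp only [Set.mem_preimage, Set.mem_image, Set.mem_iUnion]
    constructor
    · rintro ⟨v, hv, hvω⟩
      -- Having a translate in `V` is invariant along orbits, hence descends to the quotient.
      have hinv : ∀ a b, orbitRel act a b → (∃ h, act a h ∈ V) = ∃ h, act b h ∈ V := by
        rintro a _ ⟨g, rfl⟩
        refine propext ⟨fun ⟨h, hh⟩ => ⟨g⁻¹ * h, ?_⟩, fun ⟨h, hh⟩ => ⟨g * h, ?_⟩⟩
        · rwa [hact.act_mul, mul_inv_cancel_left]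
        · rwa [hact.act_mul] at hh
      have := congrArg (Quot.lift (fun a => ∃ h, act a h ∈ V) hinv) hvω
      exact this.mp ⟨1, by rwa [hact.act_one]⟩
    · rintro ⟨h, hh⟩
      exact ⟨act ω h, hh, (Quot.sound ⟨h, rfl⟩).symm⟩
  change IsOpen (Quot.mk (orbitRel act) ⁻¹' (Quot.mk (orbitRel act) '' V))
  rw [hsat]
  exact isOpen_iUnion fun h =>
    hV.preimage (hact.continuous.comp (continuous_id.prodMk continuous_const))

/-- A compact family of functions vanishing at infinity relative to `Ω/H` vanishes there
uniformly. -/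
lemma exists_compact_norm_lt_of_continuous {Ω Q A Z : Type*} [TopologicalSpace Ω]
    [TopologicalSpace Q] [NormedAddCommGroup A] [TopologicalSpace Z] {q : Ω → Q}
    {ξ : Z → (Ω →ᵇ A)} (hξ : Continuous ξ)
    (hvan : ∀ z, ∀ ε : ℝ, 0 < ε → ∃ K : Set Q, IsCompact K ∧ ∀ ω, q ω ∉ K → ‖ξ z ω‖ < ε)
    {S : Set Z} (hS : IsCompact S) {ε : ℝ} (hε : 0 < ε) :
    ∃ K : Set Q, IsCompact K ∧ ∀ z ∈ S, ∀ ω, q ω ∉ K → ‖ξ z ω‖ < ε := by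
  refine hS.induction_on (p := fun s => ∃ K : Set Q, IsCompact K ∧
    ∀ z ∈ s, ∀ ω, q ω ∉ K → ‖ξ z ω‖ < ε) ⟨∅, isCompact_empty, by simp⟩ ?_ ?_ ?_
  · rintro s t hst ⟨K, hK, h⟩
    exact ⟨K, hK, fun z hz => h z (hst hz)⟩
  · rintro s t ⟨K, hK, h⟩ ⟨K', hK', h'⟩
    refine ⟨K ∪ K', hK.union hK', ?_⟩
    rintro z (hz | hz) ω hω
    · exact h z hz ω fun hk => hω (Or.inl hk)
    · exact h' z hz ω fun hk => hω (Or.inr hk)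
  · intro z₀ _
    obtain ⟨K, hK, h⟩ := hvan z₀ (ε / 2) (half_pos hε)
    refine ⟨_, mem_nhdsWithin_of_mem_nhds
      (hξ.continuousAt.preimage_mem_nhds (Metric.ball_mem_nhds (ξ z₀) (half_pos hε))),
      K, hK, fun z hz ω hω => ?_⟩
    have h1 : dist (ξ z ω) (ξ z₀ ω) < ε / 2 :=
      (BoundedContinuousFunction.dist_coe_le_dist ω).trans_lt hz
    have h2 := h ω hω
    have h3 := norm_le_norm_add_norm_sub' (ξ z ω) (ξ z₀ ω)
    rw [dist_eq_norm] at h1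
    linarith

/-- A tube lemma over the base of an open surjection `q`: a bound that holds near every point
of the fibre over `z₀` and depends on `ω` only through `q ω` holds uniformly over compact
subsets of the base. -/
lemma eventually_forall_lt_of_isCompact {Ω Q Z : Type*} [TopologicalSpace Ω]
    [TopologicalSpace Q] [TopologicalSpace Z] {q : Ω → Q} (hq : IsOpenMap q)
    (hsurj : Function.Surjective q) {F : Z → Ω → ℝ} {z₀ : Z} {ε : ℝ}
    (hF : ∀ z ω ω', q ω = q ω' → F z ω = F z ω')
    (hlt : ∀ ω, ∀ᶠ p : Z × Ω in nhds (z₀, ω), F p.1 p.2 < ε)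
    {K : Set Q} (hK : IsCompact K) :
    ∀ᶠ z in nhds z₀, ∀ ω, q ω ∈ K → F z ω < ε := by
  refine hK.induction_on (p := fun s => ∀ᶠ z in nhds z₀, ∀ ω, q ω ∈ s → F z ω < ε)
    (by simp) ?_ ?_ ?_
  · intro s t hst ht
    filter_upwards [ht] with z hz ω hω using hz ω (hst hω)
  · intro s t hs ht
    filter_upwards [hs, ht] with z hz hz' ω hω using hω.elim (hz ω) (hz' ω)
  · intro x _
    obtain ⟨ω₀, rfl⟩ := hsurj x
    have h := hlt ω₀
    rw [nhds_prod_eq, Filter.eventually_prod_iff] at h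
    obtain ⟨pa, hpa, pb, hpb, h⟩ := h
    refine ⟨q '' {ω | pb ω}, mem_nhdsWithin_of_mem_nhds (hq.image_mem_nhds hpb), ?_⟩
    filter_upwards [hpa] with z hz ω hω
    obtain ⟨v, hv, hvω⟩ := hω
    rw [← hF z v ω hvω]
    exact h hz hv

/-- The distance between two equivariant functions is constant on orbits. -/
lemma norm_sub_eq_of_quotMk_eq {H Ω A : Type*} [Group H] [TopologicalSpace Ω]
    [NormedAddCommGroup A] [NormedSpace ℂ A] {act : Ω → H → Ω} {π : H → A → A}
    (hπ : IsIsometricAction π) {f g : Ω →ᵇ A} (hf : f ∈ IndSet act π) (hg : g ∈ IndSet act π)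
    {ω ω' : Ω} (h : Quot.mk (orbitRel act) ω = Quot.mk (orbitRel act) ω') :
    ‖f ω - g ω‖ = ‖f ω' - g ω'‖ := by
  refine congrArg (Quot.lift (fun a => ‖f a - g a‖) ?_) h
  rintro a _ ⟨k, rfl⟩
  have hsub : π k⁻¹ (f a - g a) = π k⁻¹ (f a) - π k⁻¹ (g a) := by
    rw [eq_sub_iff_add_eq, ← hπ.map_add, sub_add_cancel]
  change ‖f a - g a‖ = ‖f (act a k) - g (act a k)‖
  rw [hf.1, hg.1, ← hsub, hπ.norm_map]

/-- **Continuity criterion for maps into induced bundles.**  A map `ξ : Z → Ind_Ω A` is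
continuous (for the supremum-norm topology) if and only if for every compactly supported
continuous `γ : Z → ℝ` the map `(z, ω) ↦ γ(z) ξ(z)(ω)` is continuous and vanishes at infinity
relative to `Z × (Ω/H)`. -/
theorem continuity_criterion_induced_bundle
    {H : Type*} [Group H] [TopologicalSpace H] [DiscreteTopology H]
    {Ω : Type*} [TopologicalSpace Ω] [LocallyCompactSpace Ω] [T2Space Ω]
    {A : Type*} [NormedAddCommGroup A] [NormedSpace ℂ A] [CompleteSpace A]
    (act : Ω → H → Ω) (hact : IsFreeProperAction act)
    (π : H → A → A) (hπ : IsIsometricAction π)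
    {Z : Type*} [TopologicalSpace Z] [LocallyCompactSpace Z] [T2Space Z]
    (ξ : Z → (Ω →ᵇ A)) (hξmem : ∀ z, ξ z ∈ IndSet act π) :
    Continuous ξ ↔
      ∀ γ : C(Z, ℝ), HasCompactSupport γ →
        (Continuous fun p : Z × Ω => γ p.1 • (ξ p.1) p.2) ∧
        ∀ ε : ℝ, 0 < ε → ∃ L : Set (Z × Quot (orbitRel act)), IsCompact L ∧
          ∀ (z : Z) (ω : Ω), (z, Quot.mk (orbitRel act) ω) ∉ L →
            ‖γ z • (ξ z) ω‖ < ε := by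
  constructor
  · intro hξ γ hγ
    refine ⟨(γ.continuous.comp continuous_fst).smul
      (continuous_eval.comp ((hξ.comp continuous_fst).prodMk continuous_snd)), fun ε hε => ?_⟩
    obtain ⟨M, hM⟩ := hγ.exists_bound_of_continuous γ.continuous
    -- The bound `M` need not be positive; `|M| + 1` is, so that it is possible to divide by it.
    have hM' : 0 < |M| + 1 := by positivity
    obtain ⟨K, hK, hKlt⟩ := exists_compact_norm_lt_of_continuous hξ
      (fun z => (hξmem z).2) hγ (div_pos hε hM')
    refine ⟨tsupport γ ×ˢ K, IsCompact.prod hγ hK, fun z ω hzω => ?_⟩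
    by_cases hz : z ∈ tsupport γ
    · have h1 := hKlt z hz ω fun hk => hzω ⟨hz, hk⟩
      have h2 : ‖γ z‖ ≤ |M| + 1 := by linarith [hM z, le_abs_self M]
      rw [norm_smul]
      calc ‖γ z‖ * ‖ξ z ω‖ ≤ (|M| + 1) * ‖ξ z ω‖ := by gcongr
        _ < (|M| + 1) * (ε / (|M| + 1)) := by gcongr
        _ = ε := mul_div_cancel₀ _ hM'.ne'
    · simpa [image_eq_zero_of_notMem_tsupport hz] using hε
  · intro h
    rw [continuous_iff_continuousAt]
    intro z₀
    obtain ⟨N, hN, hNz₀⟩ := exists_compact_mem_nhds z₀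
    obtain ⟨γ, hγ1, -, hγ, -⟩ :=
      exists_continuous_one_zero_of_isCompact hN isClosed_empty (Set.disjoint_empty N)
    obtain ⟨hcont, hvan⟩ := h γ hγ
    rw [ContinuousAt, Metric.tendsto_nhds]
    intro ε hε
    obtain ⟨L, hL, hLlt⟩ := hvan (ε / 4) (by positivity)
    have hsmall : ∀ z ∈ N, ∀ ω, Quot.mk (orbitRel act) ω ∉ Prod.snd '' L → ‖ξ z ω‖ < ε / 4 := by
      intro z hz ω hω
      have := hLlt z ω fun hm => hω ⟨_, hm, rfl⟩
      rwa [hγ1 hz, Pi.one_apply, one_smul] at this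
    have hlt : ∀ ω, ∀ᶠ p : Z × Ω in nhds (z₀, ω), ‖ξ p.1 p.2 - ξ z₀ p.2‖ < ε / 2 := by
      intro ω
      have hc : Continuous fun p : Z × Ω => ‖γ p.1 • ξ p.1 p.2 - ξ z₀ p.2‖ :=
        (hcont.sub ((ξ z₀).continuous.comp continuous_snd)).norm
      have h0 : ‖γ z₀ • ξ z₀ ω - ξ z₀ ω‖ < ε / 2 := by
        rw [hγ1 (mem_of_mem_nhds hNz₀), Pi.one_apply, one_smul, sub_self, norm_zero]
        positivity
      filter_upwards [(hc.tendsto (z₀, ω)).eventually_lt_const h0,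
        continuous_fst.continuousAt.preimage_mem_nhds (x := (z₀, ω)) hNz₀] with p hp hpN
      rwa [hγ1 hpN, Pi.one_apply, one_smul] at hp
    have hunif := eventually_forall_lt_of_isCompact (isOpenMap_quotMk_orbitRel hact)
      Quot.mk_surjective (F := fun z ω => ‖ξ z ω - ξ z₀ ω‖)
      (fun z _ _ hq => norm_sub_eq_of_quotMk_eq hπ (hξmem z) (hξmem z₀) hq)
      hlt (hL.image continuous_snd)
    filter_upwards [hunif, hNz₀] with z hz hzN
    refine lt_of_le_of_lt ((BoundedContinuousFunction.dist_le (by positivity)).2 fun ω => ?_)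
      (half_lt_self hε)
    rw [dist_eq_norm]
    by_cases hω : Quot.mk (orbitRel act) ω ∈ Prod.snd '' L
    · exact (hz ω hω).le
    · have h1 := hsmall z hzN ω hω
      have h2 := hsmall z₀ (mem_of_mem_nhds hNz₀) ω hω
      linarith [norm_sub_le (ξ z ω) (ξ z₀ ω)]
end

section
/- The diagonal right H-action on Ω × Λ, given by (ω, λ) • h = (ω • h, h⁻¹ • λ), is free and proper (so its orbit space Ω ×_H Λ is locally compact Hausdorff), and the map φ defined by φ(ξ)([ω, λ]) = ξ(ω)(λ) is a well-defined linear isometric isomorphism from Ind_Ω(Ind_Λ A) onto Ind_{Ω ×_H Λ} A, with inverse sending η to the function ω ↦ (λ ↦ η([ω, λ])). -/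
/-!
The points of the orbit space of a continuous right action are handled through representatives:
the quotient map is open, so in a locally compact space every compact set of orbits is covered by
the image of a compact set of representatives (`exists_compact_lift`).  Hence "`P` holds off a
compact set of orbits" can be read upstairs (`vanish_iff`), and for `(Ω ×_H Λ)/K` it means that
there are compact `C₁ ⊆ Ω`, `C₂ ⊆ Λ` such that `P [ω, λ]` holds unless some `h`, `k` satisfy
`ω • h ∈ C₁` and `h⁻¹ • λ • k ∈ C₂` (`vanish_diag_iff`).

* The diagonal action is free and proper because the action on `Ω` is: an ultrafilter along which
  `(p • h, p)` converges already has convergent `H`-coordinate by properness on `Ω`.  The orbit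
  relation is then closed, so the orbit space is Hausdorff.
* `φ(Ξ)` vanishes at infinity: the image under `Ξ` of a compact set `C₁ ⊆ Ω` is compact, so
  finitely many of its members approximate all of it, and a single compact `C₂ ⊆ Λ` controls the
  functions `Ξ ω`, `ω ∈ C₁`, outside `C₂ • K` (`exists_uniform_compact`).
* For the inverse, properness on `Ω` shows that only a compact set of `h` moves a given compact
  `N ⊆ Ω` so as to meet `C₁`.  Thus there is a compact `E ⊆ Λ` with `‖η [ω, λ]‖ < ε` for `ω ∈ N`
  and `λ ∉ E • K` (`exists_compact_small`).  This gives the vanishing condition for each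
  `η [ω, ·]`, and also continuity of `ω ↦ η [ω, ·]` in the supremum norm: on `E` it is
  the tube lemma, on `E • K` it follows since `K` acts on `A` by isometries, and elsewhere
  both values are small.
-/

open scoped BoundedContinuousFunction ZeroAtInfty

/-- The diagonal right `H`-action on `Ω × Λ`, given by `(ω, λ) • h = (ω • h, h⁻¹ • λ)`. -/
def diagAct {Ω Λ H : Type*} [Inv H] (actΩ : Ω → H → Ω) (actΛH : H → Λ → Λ) :
    (Ω × Λ) → H → (Ω × Λ) :=
  fun p h => (actΩ p.1 h, actΛH h⁻¹ p.2)

open Set Filter Topology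

/-! ### Orbit spaces of continuous actions -/

/-- A continuous right action of an abstract group, without freeness or properness: the part of
the axioms shared by the actions on `Ω`, `Λ`, `Ω × Λ` and `Ω ×_H Λ`. -/
structure IsContAction {X G : Type*} [TopologicalSpace X] [Group G] (act : X → G → X) : Prop where
  act_one : ∀ x, act x 1 = x
  act_mul : ∀ x (g g' : G), act (act x g) g' = act x (g * g')
  cont : ∀ g, Continuous fun x => act x g

theorem IsFreeProperAction.isContAction {X G : Type*} [TopologicalSpace X] [TopologicalSpace G]
    [Group G] {act : X → G → X} (h : IsFreeProperAction act) : IsContAction act where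
  act_one := h.act_one
  act_mul := h.act_mul
  cont g := h.continuous.comp (Continuous.prodMk_left g)

theorem IsContAction.mk_eq_iff {X G : Type*} [TopologicalSpace X] [Group G] {act : X → G → X}
    (ha : IsContAction act) (x y : X) :
    Quot.mk (orbitRel act) x = Quot.mk (orbitRel act) y ↔ ∃ g, act x g = y := by
  constructor
  · intro h
    have he : Equivalence (orbitRel act) :=
      { refl := fun x => ⟨1, ha.act_one x⟩
        symm := by
          rintro x _ ⟨g, rfl⟩
          exact ⟨g⁻¹, by rw [ha.act_mul, mul_inv_cancel, ha.act_one]⟩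
        trans := by
          rintro x _ _ ⟨g, rfl⟩ ⟨g', rfl⟩
          exact ⟨g * g', (ha.act_mul _ _ _).symm⟩ }
    exact (he.eqvGen_iff).1 (Quot.eqvGen_exact h)
  · rintro ⟨g, hg⟩
    exact Quot.sound ⟨g, hg⟩

theorem IsContAction.isOpenQuotientMap {X G : Type*} [TopologicalSpace X] [Group G]
    {act : X → G → X} (ha : IsContAction act) :
    IsOpenQuotientMap (Quot.mk (orbitRel act)) := by
  refine ⟨Quot.mk_surjective, continuous_quot_mk, fun U hU => ?_⟩
  rw [← isQuotientMap_quot_mk.isOpen_preimage]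
  have : Quot.mk (orbitRel act) ⁻¹' (Quot.mk (orbitRel act) '' U) =
      ⋃ g, (fun x => act x g) ⁻¹' U := by
    ext x
    simp only [mem_preimage, mem_image, mem_iUnion]
    constructor
    · rintro ⟨y, hy, hyx⟩
      obtain ⟨g, hg⟩ := (ha.mk_eq_iff x y).1 hyx.symm
      exact ⟨g, hg ▸ hy⟩
    · rintro ⟨g, hg⟩
      exact ⟨_, hg, ((ha.mk_eq_iff _ _).2 ⟨g, rfl⟩).symm⟩
  rw [this]
  exact isOpen_iUnion fun g => hU.preimage (ha.cont g)

theorem exists_compact_lift {X Y : Type*} [TopologicalSpace X] [TopologicalSpace Y]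
    [LocallyCompactSpace X] {f : X → Y} (hf : IsOpenQuotientMap f) {C : Set Y}
    (hC : IsCompact C) : ∃ C' : Set X, IsCompact C' ∧ C ⊆ f '' C' := by
  have hex : ∀ y : Y, ∃ S : Set X, IsCompact S ∧ f '' S ∈ 𝓝 y := by
    intro y
    obtain ⟨x, rfl⟩ := hf.surjective y
    obtain ⟨S, hS, hx⟩ := exists_compact_mem_nhds x
    exact ⟨S, hS, hf.isOpenMap.image_mem_nhds hx⟩
  choose S hS hSn using hex
  obtain ⟨I, -, hI⟩ := hC.elim_nhds_subcover (fun y => f '' S y) fun y _ => hSn y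
  refine ⟨⋃ y ∈ I, S y, I.isCompact_biUnion fun y _ => hS y, hI.trans ?_⟩
  simp only [image_iUnion, subset_refl]

/-- A property holding off a compact set of orbits holds off the saturation of a compact set of
points, and conversely. -/
theorem IsContAction.vanish_iff {X G : Type*} [TopologicalSpace X] [LocallyCompactSpace X]
    [Group G] {act : X → G → X} (ha : IsContAction act) (P : X → Prop) :
    (∃ C : Set (Quot (orbitRel act)), IsCompact C ∧ ∀ x, Quot.mk (orbitRel act) x ∉ C → P x) ↔
      ∃ C : Set X, IsCompact C ∧ ∀ x, (∀ g, act x g ∉ C) → P x := by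
  constructor
  · rintro ⟨C, hC, hP⟩
    obtain ⟨C', hC', hsub⟩ := exists_compact_lift ha.isOpenQuotientMap hC
    refine ⟨C', hC', fun x hx => hP x fun hxC => ?_⟩
    obtain ⟨y, hy, hyx⟩ := hsub hxC
    obtain ⟨g, rfl⟩ := (ha.mk_eq_iff x y).1 hyx.symm
    exact hx g hy
  · rintro ⟨C, hC, hP⟩
    refine ⟨Quot.mk _ '' C, hC.image continuous_quot_mk, fun x hx => hP x fun g hg => hx ?_⟩
    exact ⟨_, hg, ((ha.mk_eq_iff _ _).2 ⟨g, rfl⟩).symm⟩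

/-- The orbit space of a continuous proper action is Hausdorff, its orbit relation being the range
of a closed map. -/
theorem IsContAction.t2Space {X G : Type*} [TopologicalSpace X] [Group G] [TopologicalSpace G]
    {act : X → G → X} (ha : IsContAction act)
    (hp : IsProperMap fun q : X × G => (act q.1 q.2, q.1)) :
    T2Space (Quot (orbitRel act)) := by
  rw [t2Space_iff_of_isOpenQuotientMap ha.isOpenQuotientMap]
  convert hp.isClosedMap.isClosed_range using 1
  ext ⟨x, y⟩
  simp only [mem_ofPred_eq, mem_range, Prod.mk.injEq, Prod.exists]
  rw [eq_comm, ha.mk_eq_iff]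
  constructor
  · rintro ⟨g, hg⟩
    exact ⟨y, g, hg, rfl⟩
  · rintro ⟨_, g, hg, rfl⟩
    exact ⟨g, hg⟩

/-! ### The diagonal action -/

theorem isContAction_diagAct {H Ω Λ : Type*} [Group H] [TopologicalSpace Ω] [TopologicalSpace Λ]
    {actΩ : Ω → H → Ω} (hΩ : IsContAction actΩ) {actΛH : H → Λ → Λ}
    (hΛH1 : ∀ l, actΛH 1 l = l)
    (hΛHmul : ∀ (h h' : H) (l : Λ), actΛH (h * h') l = actΛH h (actΛH h' l))
    (hΛHcont : ∀ h : H, Continuous (actΛH h)) : IsContAction (diagAct actΩ actΛH) where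
  act_one p := by simp [diagAct, hΩ.act_one, hΛH1]
  act_mul p g g' := by simp [diagAct, hΩ.act_mul, hΛHmul]
  cont g := ((hΩ.cont g).comp continuous_fst).prodMk ((hΛHcont g⁻¹).comp continuous_snd)

theorem isProperMap_diagAct {H Ω Λ : Type*} [Group H] [TopologicalSpace H] [DiscreteTopology H]
    [TopologicalSpace Ω] [T2Space Ω] [TopologicalSpace Λ] [T2Space Λ]
    {actΩ : Ω → H → Ω} (hΩ : IsFreeProperAction actΩ) {actΛH : H → Λ → Λ}
    (hΛHcont : ∀ h : H, Continuous (actΛH h)) :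
    IsProperMap (fun q : (Ω × Λ) × H => (diagAct actΩ actΛH q.1 q.2, q.1)) := by
  rw [isProperMap_iff_ultrafilter_of_t2]
  constructor
  · rw [continuous_prod_of_discrete_right]
    intro h
    exact ((((hΩ.isContAction.cont h).comp continuous_fst).prodMk
      ((hΛHcont h⁻¹).comp continuous_snd))).prodMk continuous_id
  · rintro 𝒰 ⟨⟨a, b⟩, ⟨c, d⟩⟩ hy
    rw [nhds_prod_eq, nhds_prod_eq, nhds_prod_eq, tendsto_prod_iff', tendsto_prod_iff',
      tendsto_prod_iff'] at hy
    obtain ⟨⟨h1, -⟩, h2, h3⟩ := hy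
    have h4 : Tendsto (fun p : Ω × H => (actΩ p.1 p.2, p.1))
        (Ultrafilter.map (fun q : (Ω × Λ) × H => (q.1.1, q.2)) 𝒰 : Filter (Ω × H)) (𝓝 (a, c)) := by
      rw [Ultrafilter.coe_map, tendsto_map'_iff, nhds_prod_eq]
      exact h1.prodMk h2
    obtain ⟨⟨c', h⟩, -, hlim⟩ := hΩ.proper.ultrafilter_le_nhds_of_tendsto h4
    have h5 : Tendsto (fun q : (Ω × Λ) × H => q.2) 𝒰 (𝓝 h) :=
      (continuous_snd.tendsto (c', h)).comp (f := fun q : (Ω × Λ) × H => (q.1.1, q.2)) hlim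
    refine ⟨((c, d), h), ?_⟩
    change Tendsto id (𝒰 : Filter ((Ω × Λ) × H)) _
    rw [nhds_prod_eq, nhds_prod_eq]
    exact (h2.prodMk h3).prodMk h5

theorem isContAction_quot {H K Ω Λ : Type*} [Group H] [Group K] [TopologicalSpace Ω]
    [TopologicalSpace Λ] {actΩ : Ω → H → Ω} {actΛH : H → Λ → Λ}
    {actΛK : Λ → K → Λ} (hΛK : IsContAction actΛK)
    {actQ : Quot (orbitRel (diagAct actΩ actΛH)) → K → Quot (orbitRel (diagAct actΩ actΛH))}
    (hactQ : ∀ (p : Ω × Λ) (k : K), actQ (Quot.mk (orbitRel (diagAct actΩ actΛH)) p) k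
        = Quot.mk (orbitRel (diagAct actΩ actΛH)) (p.1, actΛK p.2 k)) :
    IsContAction actQ where
  act_one := by
    rintro ⟨p⟩
    rw [hactQ, hΛK.act_one]
  act_mul := by
    rintro ⟨p⟩ k k'
    rw [hactQ, hactQ, hactQ, hΛK.act_mul]
  cont k := by
    rw [isQuotientMap_quot_mk.continuous_iff]
    have : (fun x => actQ x k) ∘ Quot.mk (orbitRel (diagAct actΩ actΛH)) =
        fun p => Quot.mk (orbitRel (diagAct actΩ actΛH)) (p.1, actΛK p.2 k) :=
      funext fun p => hactQ p k
    rw [this]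
    exact continuous_quot_mk.comp
      (continuous_fst.prodMk ((hΛK.cont k).comp continuous_snd))

/-- Vanishing at infinity relative to `(Ω ×_H Λ)/K`, read on `Ω × Λ`. -/
theorem vanish_diag_iff {H K Ω Λ : Type*} [Group H] [Group K] [TopologicalSpace Ω]
    [LocallyCompactSpace Ω] [TopologicalSpace Λ] [LocallyCompactSpace Λ]
    {actΩ : Ω → H → Ω} {actΛH : H → Λ → Λ} (hD : IsContAction (diagAct actΩ actΛH))
    {actΛK : Λ → K → Λ} (hΛK : IsContAction actΛK)
    (hcomm : ∀ (h : H) (l : Λ) (k : K), actΛH h (actΛK l k) = actΛK (actΛH h l) k)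
    {actQ : Quot (orbitRel (diagAct actΩ actΛH)) → K → Quot (orbitRel (diagAct actΩ actΛH))}
    (hactQ : ∀ (p : Ω × Λ) (k : K), actQ (Quot.mk (orbitRel (diagAct actΩ actΛH)) p) k
        = Quot.mk (orbitRel (diagAct actΩ actΛH)) (p.1, actΛK p.2 k))
    (P : Quot (orbitRel (diagAct actΩ actΛH)) → Prop) :
    (∃ C : Set (Quot (orbitRel actQ)), IsCompact C ∧ ∀ x, Quot.mk (orbitRel actQ) x ∉ C → P x) ↔
      ∃ (C₁ : Set Ω) (C₂ : Set Λ), IsCompact C₁ ∧ IsCompact C₂ ∧ ∀ ω l,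
        (∀ h k, actΩ ω h ∈ C₁ → actΛK (actΛH h⁻¹ l) k ∉ C₂) →
          P (Quot.mk (orbitRel (diagAct actΩ actΛH)) (ω, l)) := by
  have : LocallyCompactSpace (Quot (orbitRel (diagAct actΩ actΛH))) :=
    hD.isOpenQuotientMap.locallyCompactSpace
  rw [(isContAction_quot hΛK hactQ).vanish_iff]
  constructor
  · rintro ⟨C, hC, hP⟩
    obtain ⟨C', hC', hsub⟩ := exists_compact_lift hD.isOpenQuotientMap hC
    refine ⟨Prod.fst '' C', Prod.snd '' C', hC'.image continuous_fst, hC'.image continuous_snd,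
      fun ω l hωl => hP _ fun k hk => ?_⟩
    obtain ⟨p, hp, hpk⟩ := hsub hk
    rw [hactQ] at hpk
    obtain ⟨h, rfl⟩ := (hD.mk_eq_iff _ _).1 hpk.symm
    refine hωl h k ⟨_, hp, rfl⟩ ⟨_, hp, ?_⟩
    exact hcomm _ _ _
  · rintro ⟨C₁, C₂, hC₁, hC₂, hP⟩
    refine ⟨Quot.mk _ '' (C₁ ×ˢ C₂), (hC₁.prod hC₂).image continuous_quot_mk, ?_⟩
    rintro ⟨ω, l⟩ hx
    refine hP ω l fun h k h1 h2 => hx k ⟨(actΩ ω h, actΛK (actΛH h⁻¹ l) k), ⟨h1, h2⟩, ?_⟩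
    rw [hactQ, eq_comm, hD.mk_eq_iff]
    exact ⟨h, Prod.ext rfl (hcomm _ _ _)⟩

/-! ### Uniform vanishing estimates -/

/-- If the functions `Ξ ω` vanish at infinity relative to `Λ/K`, they do so uniformly for `ω` in a
compact set. -/
theorem exists_uniform_compact {K Ω Λ A : Type*} [Group K] [TopologicalSpace Ω]
    [TopologicalSpace Λ] [LocallyCompactSpace Λ] [NormedAddCommGroup A]
    {actΛK : Λ → K → Λ} (hΛK : IsContAction actΛK) {πA : K → A → A}
    (Ξ : Ω →ᵇ (Λ →ᵇ A)) (hΞ : ∀ ω, Ξ ω ∈ IndSet actΛK πA) {C₁ : Set Ω} (hC₁ : IsCompact C₁)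
    {ε : ℝ} (hε : 0 < ε) :
    ∃ C₂ : Set Λ, IsCompact C₂ ∧ ∀ ω ∈ C₁, ∀ l, (∀ k, actΛK l k ∉ C₂) → ‖Ξ ω l‖ < ε := by
  have hex : ∀ ω, ∃ D : Set Λ, IsCompact D ∧ ∀ l, (∀ k, actΛK l k ∉ D) → ‖Ξ ω l‖ < ε / 2 :=
    fun ω => (hΛK.vanish_iff _).1 ((hΞ ω).2 _ (half_pos hε))
  choose D hD hDs using hex
  obtain ⟨I, -, hI⟩ := hC₁.elim_nhds_subcover (fun ω => {ω' | dist (Ξ ω') (Ξ ω) < ε / 2})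
    fun ω _ => Metric.tendsto_nhds.1 (Ξ.continuous.tendsto ω) _ (half_pos hε)
  refine ⟨⋃ ω ∈ I, D ω, I.isCompact_biUnion fun ω _ => hD ω, fun ω' hω' l hl => ?_⟩
  obtain ⟨ω, hωI, hω⟩ := mem_iUnion₂.1 (hI hω')
  have h1 : ‖Ξ ω l‖ < ε / 2 :=
    hDs ω l fun k hk => hl k (mem_iUnion₂.2 ⟨ω, hωI, hk⟩)
  have h2 : dist (Ξ ω' l) (Ξ ω l) < ε / 2 :=
    (BoundedContinuousFunction.dist_coe_le_dist l).trans_lt hω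
  rw [dist_eq_norm] at h2
  calc ‖Ξ ω' l‖ = ‖(Ξ ω' l - Ξ ω l) + Ξ ω l‖ := by rw [sub_add_cancel]
    _ ≤ ‖Ξ ω' l - Ξ ω l‖ + ‖Ξ ω l‖ := norm_add_le _ _
    _ < ε := by linarith

/-- The part over a compact `N ⊆ Ω` of the saturation of `C₁ × C₂` under `H` and `K` has its
`Λ`-coordinates in `E • K` for some compact `E`: by properness on `Ω`, only a compact set of `h`
satisfies `ω • h ∈ C₁` for some `ω ∈ N`, and `E` is the image of `C₂` under these `h`. -/
theorem exists_compact_small {H K Ω Λ : Type*} [Group H] [TopologicalSpace H]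
    [DiscreteTopology H] [Group K] [TopologicalSpace Ω] [TopologicalSpace Λ]
    {actΩ : Ω → H → Ω} (hΩ : IsFreeProperAction actΩ) {actΛH : H → Λ → Λ}
    (hΛH1 : ∀ l, actΛH 1 l = l)
    (hΛHmul : ∀ (h h' : H) (l : Λ), actΛH (h * h') l = actΛH h (actΛH h' l))
    (hΛHcont : ∀ h : H, Continuous (actΛH h)) {actΛK : Λ → K → Λ}
    (hcomm : ∀ (h : H) (l : Λ) (k : K), actΛH h (actΛK l k) = actΛK (actΛH h l) k)
    {C₁ N : Set Ω} {C₂ : Set Λ} (hC₁ : IsCompact C₁) (hN : IsCompact N) (hC₂ : IsCompact C₂) :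
    ∃ E : Set Λ, IsCompact E ∧ ∀ ω ∈ N, ∀ l, (∀ k, actΛK l k ∉ E) →
      ∀ h k, actΩ ω h ∈ C₁ → actΛK (actΛH h⁻¹ l) k ∉ C₂ := by
  have hS : IsCompact (Prod.snd '' ((fun p : Ω × H => (actΩ p.1 p.2, p.1)) ⁻¹' (C₁ ×ˢ N))) :=
    (hΩ.proper.isCompact_preimage (hC₁.prod hN)).image continuous_snd
  have hc : Continuous fun p : H × Λ => actΛH p.1 p.2 :=
    continuous_prod_of_discrete_left.2 hΛHcont
  refine ⟨_, (hS.prod hC₂).image hc, fun ω hω l hl h k h1 h2 => hl k ?_⟩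
  refine ⟨(h, actΛK (actΛH h⁻¹ l) k), ⟨⟨(ω, h), ⟨h1, hω⟩, rfl⟩, h2⟩, ?_⟩
  change actΛH h (actΛK (actΛH h⁻¹ l) k) = _
  rw [hcomm, ← hΛHmul, mul_inv_cancel, hΛH1]

/-- **Composition of induced spaces.**  The diagonal right `H`-action on `Ω × Λ` is free and
proper (so its orbit space `Ω ×_H Λ` is locally compact Hausdorff), and
`φ(ξ)([ω, λ]) = ξ(ω)(λ)` is a well-defined linear isometric isomorphism
`Ind_Ω (Ind_Λ A) ≅ Ind_{Ω ×_H Λ} A`, with inverse `η ↦ (ω ↦ (λ ↦ η [ω, λ]))`. -/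
theorem indSet_composition_iso
    {H : Type*} [Group H] [TopologicalSpace H] [DiscreteTopology H]
    {K : Type*} [Group K] [TopologicalSpace K] [DiscreteTopology K]
    {Ω : Type*} [TopologicalSpace Ω] [LocallyCompactSpace Ω] [T2Space Ω]
    {Λ : Type*} [TopologicalSpace Λ] [LocallyCompactSpace Λ] [T2Space Λ]
    {A : Type*} [NormedAddCommGroup A] [NormedSpace ℂ A] [CompleteSpace A]
    -- the free and proper right `H`-action on `Ω`
    (actΩ : Ω → H → Ω) (hactΩ : IsFreeProperAction actΩ)
    -- the continuous left `H`-action on `Λ`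
    (actΛH : H → Λ → Λ)
    (hΛH1 : ∀ l, actΛH 1 l = l)
    (hΛHmul : ∀ (h h' : H) (l : Λ), actΛH (h * h') l = actΛH h (actΛH h' l))
    (hΛHcont : ∀ h : H, Continuous (actΛH h))
    -- the free and proper right `K`-action on `Λ`, commuting with the `H`-action
    (actΛK : Λ → K → Λ) (hactΛK : IsFreeProperAction actΛK)
    (hcomm : ∀ (h : H) (l : Λ) (k : K), actΛH h (actΛK l k) = actΛK (actΛH h l) k)
    -- the isometric left `K`-action on `A`
    (πA : K → A → A) (hπA : IsIsometricAction πA)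
    -- the induced left `H`-action on `Λ →ᵇ A`, `(h • ξ)(λ) = ξ(h⁻¹ • λ)`
    (πH : H → (Λ →ᵇ A) → (Λ →ᵇ A))
    (hπH : ∀ (h : H) (ξ : Λ →ᵇ A) (l : Λ), (πH h ξ) l = ξ (actΛH h⁻¹ l))
    -- the right `K`-action on the orbit space `Ω ×_H Λ`, `[ω, λ] • k = [ω, λ • k]`
    (actQ : Quot (orbitRel (diagAct actΩ actΛH)) → K →
      Quot (orbitRel (diagAct actΩ actΛH)))
    (hactQ : ∀ (p : Ω × Λ) (k : K),
      actQ (Quot.mk (orbitRel (diagAct actΩ actΛH)) p) k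
        = Quot.mk (orbitRel (diagAct actΩ actΛH)) (p.1, actΛK p.2 k)) :
    -- the diagonal action is free
    (∀ (p : Ω × Λ) (h : H), diagAct actΩ actΛH p h = p → h = 1) ∧
    -- the diagonal action is proper
    IsProperMap (fun q : (Ω × Λ) × H => (diagAct actΩ actΛH q.1 q.2, q.1)) ∧
    -- the orbit space `Ω ×_H Λ` is locally compact Hausdorff
    LocallyCompactSpace (Quot (orbitRel (diagAct actΩ actΛH))) ∧
    T2Space (Quot (orbitRel (diagAct actΩ actΛH))) ∧
    -- `φ` is well defined and isometric
    (∀ Ξ : Ω →ᵇ (Λ →ᵇ A), Ξ ∈ IndSet actΩ πH → (∀ ω, Ξ ω ∈ IndSet actΛK πA) →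
      ∃ η : Quot (orbitRel (diagAct actΩ actΛH)) →ᵇ A, η ∈ IndSet actQ πA ∧
        (∀ (ω : Ω) (l : Λ),
          η (Quot.mk (orbitRel (diagAct actΩ actΛH)) (ω, l)) = Ξ ω l) ∧
        ‖η‖ = ‖Ξ‖) ∧
    -- `φ` is surjective, with inverse `η ↦ (ω ↦ (λ ↦ η [ω, λ]))`
    (∀ η : Quot (orbitRel (diagAct actΩ actΛH)) →ᵇ A, η ∈ IndSet actQ πA →
      ∃ Ξ : Ω →ᵇ (Λ →ᵇ A), Ξ ∈ IndSet actΩ πH ∧ (∀ ω, Ξ ω ∈ IndSet actΛK πA) ∧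
        ∀ (ω : Ω) (l : Λ),
          Ξ ω l = η (Quot.mk (orbitRel (diagAct actΩ actΛH)) (ω, l))) := by
  have hΛK := hactΛK.isContAction
  have hD : IsContAction (diagAct actΩ actΛH) :=
    isContAction_diagAct hactΩ.isContAction hΛH1 hΛHmul hΛHcont
  have hprop := isProperMap_diagAct (Λ := Λ) hactΩ hΛHcont
  refine ⟨fun p h hp => hactΩ.free p.1 h (congrArg Prod.fst hp), hprop,
    hD.isOpenQuotientMap.locallyCompactSpace, hD.t2Space hprop, ?_, ?_⟩
  · intro Ξ hΞ hΞΛ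
    have hwd : ∀ p q : Ω × Λ, orbitRel (diagAct actΩ actΛH) p q → Ξ p.1 p.2 = Ξ q.1 q.2 := by
      rintro p _ ⟨h, rfl⟩
      simp only [diagAct]
      rw [hΞ.1, hπH, inv_inv, ← hΛHmul, mul_inv_cancel, hΛH1]
    have hcont : Continuous (Quot.lift (fun p : Ω × Λ => Ξ p.1 p.2) hwd) :=
      isQuotientMap_quot_mk.continuous_iff.2
        ((Ξ.continuous.comp continuous_fst).eval continuous_snd)
    let η : Quot (orbitRel (diagAct actΩ actΛH)) →ᵇ A :=
      BoundedContinuousFunction.ofNormedAddCommGroup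
        (Quot.lift (fun p : Ω × Λ => Ξ p.1 p.2) hwd) hcont ‖Ξ‖ (by
          rintro ⟨p⟩
          exact ((Ξ p.1).norm_coe_le_norm p.2).trans (Ξ.norm_coe_le_norm p.1))
    have hη : ∀ ω l, η (Quot.mk _ (ω, l)) = Ξ ω l := fun ω l => rfl
    refine ⟨η, ⟨?_, fun ε hε => ?_⟩, hη, le_antisymm ?_ ?_⟩
    · rintro ⟨ω, l⟩ k
      rw [hactQ, hη, hη]
      exact (hΞΛ ω).1 l k
    · rw [vanish_diag_iff hD hΛK hcomm hactQ (fun x => ‖η x‖ < ε)]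
      obtain ⟨C₁, hC₁, h1⟩ := (hactΩ.isContAction.vanish_iff _).1 (hΞ.2 ε hε)
      obtain ⟨C₂, hC₂, h2⟩ := exists_uniform_compact hΛK Ξ hΞΛ hC₁ hε
      refine ⟨C₁, C₂, hC₁, hC₂, fun ω l hωl => ?_⟩
      by_cases hω : ∃ h, actΩ ω h ∈ C₁
      · obtain ⟨h, hh⟩ := hω
        -- replace `(ω, l)` by the representative whose first coordinate lies in `C₁`
        have : Quot.mk (orbitRel (diagAct actΩ actΛH)) (ω, l) =
            Quot.mk _ (actΩ ω h, actΛH h⁻¹ l) := Quot.sound ⟨h, rfl⟩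
        rw [this, hη]
        exact h2 _ hh _ fun k => hωl h k hh
      · exact ((Ξ ω).norm_coe_le_norm l).trans_lt (h1 ω (not_exists.1 hω))
    · exact BoundedContinuousFunction.norm_ofNormedAddCommGroup_le _ (norm_nonneg _) _
    · refine (BoundedContinuousFunction.norm_le (norm_nonneg _)).2 fun ω =>
        (BoundedContinuousFunction.norm_le (norm_nonneg _)).2 fun l => ?_
      rw [← hη]
      exact η.norm_coe_le_norm _
  · intro η hη
    have hsmall : ∀ ε : ℝ, 0 < ε → ∃ (C₁ : Set Ω) (C₂ : Set Λ), IsCompact C₁ ∧ IsCompact C₂ ∧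
        ∀ ω l, (∀ h k, actΩ ω h ∈ C₁ → actΛK (actΛH h⁻¹ l) k ∉ C₂) →
          ‖η (Quot.mk (orbitRel (diagAct actΩ actΛH)) (ω, l))‖ < ε := fun ε hε =>
      (vanish_diag_iff hD hΛK hcomm hactQ (fun x => ‖η x‖ < ε)).1 (hη.2 ε hε)
    have hsmallN : ∀ ε : ℝ, 0 < ε → ∀ N : Set Ω, IsCompact N → ∃ E : Set Λ, IsCompact E ∧
        ∀ ω ∈ N, ∀ l, (∀ k, actΛK l k ∉ E) →
          ‖η (Quot.mk (orbitRel (diagAct actΩ actΛH)) (ω, l))‖ < ε := by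
      intro ε hε N hN
      obtain ⟨C₁, C₂, hC₁, hC₂, hC⟩ := hsmall ε hε
      obtain ⟨E, hE, hE'⟩ :=
        exists_compact_small hactΩ hΛH1 hΛHmul hΛHcont hcomm hC₁ hN hC₂
      exact ⟨E, hE, fun ω hω l hl => hC ω l (hE' ω hω l hl)⟩
    have hcont : Continuous fun p : Ω × Λ =>
        η (Quot.mk (orbitRel (diagAct actΩ actΛH)) p) := η.continuous.comp continuous_quot_mk
    have hequiv : ∀ ω l k, η (Quot.mk (orbitRel (diagAct actΩ actΛH)) (ω, actΛK l k)) =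
        πA k⁻¹ (η (Quot.mk (orbitRel (diagAct actΩ actΛH)) (ω, l))) := by
      intro ω l k
      rw [← hη.1, hactQ]
    have hπdist : ∀ k a b, ‖πA k a - πA k b‖ = ‖a - b‖ := by
      intro k a b
      have h1 : πA k (a - b) + πA k b = πA k a := by rw [← hπA.map_add, sub_add_cancel]
      rw [← h1, add_sub_cancel_right, hπA.norm_map]
    let F : Ω → (Λ →ᵇ A) := fun ω =>
      BoundedContinuousFunction.ofNormedAddCommGroup
        (fun l => η (Quot.mk (orbitRel (diagAct actΩ actΛH)) (ω, l)))
        (hcont.comp (Continuous.prodMk_right ω)) ‖η‖ (fun l => η.norm_coe_le_norm _)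
    have hF : ∀ ω l, F ω l = η (Quot.mk (orbitRel (diagAct actΩ actΛH)) (ω, l)) :=
      fun _ _ => rfl
    have hFcont : Continuous F := by
      rw [continuous_iff_continuousAt]
      intro ω₀
      rw [ContinuousAt, Metric.tendsto_nhds]
      intro ε hε
      obtain ⟨N, hN, hNω⟩ := exists_compact_mem_nhds ω₀
      obtain ⟨E, hE, hE'⟩ := hsmallN (ε / 4) (by positivity) N hN
      have htube : ∀ᶠ ω in 𝓝 ω₀, ∀ l ∈ E, ‖F ω l - F ω₀ l‖ < ε / 2 := by
        refine hE.eventually_forall_of_forall_eventually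
          (P := fun ω l => ‖F ω l - F ω₀ l‖ < ε / 2) fun l _ => ?_
        have hc : Continuous fun p : Ω × Λ => ‖F p.1 p.2 - F ω₀ p.2‖ :=
          (hcont.sub ((F ω₀).continuous.comp continuous_snd)).norm
        refine hc.continuousAt.eventually_lt continuousAt_const ?_
        simpa using half_pos hε
      filter_upwards [htube, hNω] with ω hω hωN
      refine lt_of_le_of_lt ?_ (half_lt_self hε)
      refine (BoundedContinuousFunction.dist_le (half_pos hε).le).2 fun l => ?_
      rw [dist_eq_norm]
      by_cases hl : ∃ k, actΛK l k ∈ E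
      · obtain ⟨k, hk⟩ := hl
        have := hω _ hk
        rw [hF, hF, hequiv, hequiv, hπdist] at this
        exact this.le
      · have h1 := hE' ω hωN l (not_exists.1 hl)
        have h2 := hE' ω₀ (mem_of_mem_nhds hNω) l (not_exists.1 hl)
        have h3 := norm_sub_le (F ω l) (F ω₀ l)
        rw [← hF] at h1 h2
        linarith
    let Ξ : Ω →ᵇ (Λ →ᵇ A) := BoundedContinuousFunction.ofNormedAddCommGroup F hFcont ‖η‖
      fun ω => BoundedContinuousFunction.norm_ofNormedAddCommGroup_le _ (norm_nonneg _) _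
    refine ⟨Ξ, ⟨fun ω h => ?_, fun ε hε => ?_⟩, fun ω => ⟨fun l k => hequiv ω l k,
      fun ε hε => ?_⟩, fun ω l => rfl⟩
    · ext l
      rw [hπH, inv_inv]
      change η _ = η _
      refine congrArg η (Quot.sound ⟨h, ?_⟩ : Quot.mk _ (ω, actΛH h l) = _).symm
      simp only [diagAct]
      rw [← hΛHmul, inv_mul_cancel, hΛH1]
    · obtain ⟨C₁, C₂, hC₁, hC₂, hC⟩ := hsmall (ε / 2) (half_pos hε)
      refine (hactΩ.isContAction.vanish_iff _).2 ⟨C₁, hC₁, fun ω hω => ?_⟩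
      refine lt_of_le_of_lt ?_ (half_lt_self hε)
      exact (BoundedContinuousFunction.norm_le (half_pos hε).le).2 fun l =>
        (hC ω l fun h _ hh => absurd hh (hω h)).le
    · obtain ⟨E, hE, hE'⟩ := hsmallN ε hε {ω} isCompact_singleton
      exact (hΛK.vanish_iff _).2 ⟨E, hE, hE' ω rfl⟩
end

section
/- Let c_Ω be a cutoff function for the right H-action on Ω and let c_Λ be a cutoff function for the right K-action on Λ. Then the formula c([ω, λ]) = ∑_{h∈H} c_Ω(ω • h) c_Λ(h⁻¹ • λ) (a sum with only finitely many nonzero terms) gives a well-defined continuous function c : Ω ×_H Λ → ℝ≥0, and c is a cutoff function for the right K-action on Ω ×_H Λ. -/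
/-!
The diagonal action has only finitely many relevant group elements locally: if `A ⊆ Ω` is compact,
the set of `h` with `ω • h ∈ supp c_Ω` for some `ω ∈ A` is the projection to the discrete group `H`
of a compact set, hence finite (`IsCutoff.finite_return`). So the sum defining `c` is, over
`A × Λ`, a fixed finite sum; this gives continuity, and lets the sums over `k` and `h` be
interchanged in `∑ₖ c([ω, λ] • k) = ∑ₕ c_Ω(ω • h) ∑ₖ c_Λ((h⁻¹ • λ) • k) = 1`.
Invariance under the diagonal action is the substitution `h ↦ g * h`.

For the compactness condition it suffices that, for compact `C ⊆ Ω ×_H Λ`, only finitely many `k`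
satisfy `q • k ∈ supp c` for some `q ∈ C` (`isCutoff_compact_of_finite`). This may be checked
locally on `C`. As the quotient map is open, `(ω, λ • k)` then lies in the closure
of the support of the lifted function; if `ω` is in the interior of a compact `A` and `λ` in a
compact `B`, some `h` in the finite set attached to `A` satisfies
`(h⁻¹ • λ) • k ∈ supp c_Λ`, which leaves finitely many `k` since each `h⁻¹ • B` is compact.
-/

open scoped BoundedContinuousFunction ZeroAtInfty

/-- A cutoff function for a right action `act` of a discrete group `Γ` on a space `Z`:
a continuous nonnegative function `c` with `∑_{g ∈ Γ} c(z • g) = 1` for all `z`, such that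
for every compact `C ⊆ Z` the set `{(z, g) : z ∈ C, z • g ∈ supp c}` is compact. -/
def IsCutoff {Z Γ : Type*} [TopologicalSpace Z] [TopologicalSpace Γ]
    (act : Z → Γ → Z) (c : Z → ℝ) : Prop :=
  Continuous c ∧ (∀ z, 0 ≤ c z) ∧ (∀ z, HasSum (fun g : Γ => c (act z g)) 1) ∧
  ∀ C : Set Z, IsCompact C →
    IsCompact {p : Z × Γ | p.1 ∈ C ∧ act p.1 p.2 ∈ tsupport c}

/-- Only finitely many group elements move some point of a given compact set into the support of
a cutoff function. -/
lemma IsCutoff.finite_return {Z Γ : Type*} [TopologicalSpace Z] [TopologicalSpace Γ]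
    [DiscreteTopology Γ] {act : Z → Γ → Z} {c : Z → ℝ} (hc : IsCutoff act c)
    {C : Set Z} (hC : IsCompact C) :
    {g : Γ | ∃ z ∈ C, act z g ∈ tsupport c}.Finite := by
  have h := ((hc.2.2.2 C hC).image continuous_snd).finite_of_discrete
  refine h.subset ?_
  rintro g ⟨z, hz, hg⟩
  exact ⟨(z, g), ⟨hz, hg⟩, rfl⟩

/-- The compactness condition on a cutoff function follows from finiteness of
the set of group elements that occur. The space need not be Hausdorff. -/
lemma isCutoff_compact_of_finite {Z Γ : Type*} [TopologicalSpace Z] [TopologicalSpace Γ]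
    {act : Z → Γ → Z} (hact : ∀ g, Continuous fun z => act z g) {c : Z → ℝ}
    {C : Set Z} (hC : IsCompact C) (hfin : {g : Γ | ∃ z ∈ C, act z g ∈ tsupport c}.Finite) :
    IsCompact {p : Z × Γ | p.1 ∈ C ∧ act p.1 p.2 ∈ tsupport c} := by
  have key : {p : Z × Γ | p.1 ∈ C ∧ act p.1 p.2 ∈ tsupport c} =
      ⋃ g ∈ {g : Γ | ∃ z ∈ C, act z g ∈ tsupport c},
        (C ∩ (fun z => act z g) ⁻¹' tsupport c) ×ˢ {g} := by
    ext ⟨z, g⟩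
    simp only [Set.mem_ofPred_eq, Set.mem_iUnion, Set.mem_prod, Set.mem_inter_iff,
      Set.mem_preimage, Set.mem_singleton_iff, exists_prop]
    constructor
    · rintro ⟨hz, hg⟩
      exact ⟨g, ⟨z, hz, hg⟩, ⟨hz, hg⟩, rfl⟩
    · rintro ⟨g', -, ⟨hz, hg⟩, rfl⟩
      exact ⟨hz, hg⟩
  rw [key]
  refine hfin.isCompact_biUnion fun g _ => ?_
  exact (hC.inter_right ((isClosed_tsupport c).preimage (hact g))).prod isCompact_singleton

/-- The quotient map onto the orbit space of an action by homeomorphisms is open. -/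
lemma isOpenMap_quot_orbitRel {Z Γ : Type*} [TopologicalSpace Z] [Group Γ] {act : Z → Γ → Z}
    (h_one : ∀ z, act z 1 = z) (h_mul : ∀ z g g', act (act z g) g' = act z (g * g'))
    (hact : ∀ g, Continuous fun z => act z g) : IsOpenMap (Quot.mk (orbitRel act)) := by
  have heq : Equivalence (orbitRel act) :=
    ⟨fun z => ⟨1, h_one z⟩,
      fun {x y} ⟨g, hg⟩ => ⟨g⁻¹, by rw [← hg, h_mul, mul_inv_cancel, h_one]⟩,
      fun {x y z} ⟨g, hg⟩ ⟨g', hg'⟩ => ⟨g * g', by rw [← h_mul, hg, hg']⟩⟩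
  intro U hU
  rw [← isQuotientMap_quot_mk.isOpen_preimage]
  have key : Quot.mk (orbitRel act) ⁻¹' (Quot.mk (orbitRel act) '' U) =
      ⋃ g, (fun z => act z g) ⁻¹' U := by
    ext z
    simp only [Set.mem_preimage, Set.mem_image, Set.mem_iUnion]
    constructor
    · rintro ⟨u, hu, he⟩
      obtain ⟨g, hg⟩ := heq.eqvGen_iff.1 (Quot.eqvGen_exact he.symm)
      exact ⟨g, hg ▸ hu⟩
    · rintro ⟨g, hg⟩
      exact ⟨_, hg, (Quot.sound ⟨g, rfl⟩).symm⟩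
  rw [key]
  exact isOpen_iUnion fun g => hU.preimage (hact g)

/-- **Product of cutoff functions.**  If `c_Ω` is a cutoff function for the right `H`-action
on `Ω` and `c_Λ` is a cutoff function for the right `K`-action on `Λ`, then
`c([ω, λ]) = ∑_{h ∈ H} c_Ω(ω • h) c_Λ(h⁻¹ • λ)` (a sum with finitely many nonzero terms)
is a well-defined continuous function on `Ω ×_H Λ` and is a cutoff function for the right
`K`-action on `Ω ×_H Λ`. -/
theorem cutoff_product
    {H : Type*} [Group H] [TopologicalSpace H] [DiscreteTopology H]
    {K : Type*} [Group K] [TopologicalSpace K] [DiscreteTopology K]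
    {Ω : Type*} [TopologicalSpace Ω] [LocallyCompactSpace Ω] [T2Space Ω]
    {Λ : Type*} [TopologicalSpace Λ] [LocallyCompactSpace Λ] [T2Space Λ]
    -- the free and proper right `H`-action on `Ω`
    (actΩ : Ω → H → Ω) (hactΩ : IsFreeProperAction actΩ)
    -- the continuous left `H`-action on `Λ`
    (actΛH : H → Λ → Λ)
    (hΛH1 : ∀ l, actΛH 1 l = l)
    (hΛHmul : ∀ (h h' : H) (l : Λ), actΛH (h * h') l = actΛH h (actΛH h' l))
    (hΛHcont : ∀ h : H, Continuous (actΛH h))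
    -- the free and proper right `K`-action on `Λ`, commuting with the `H`-action
    (actΛK : Λ → K → Λ) (hactΛK : IsFreeProperAction actΛK)
    (hcomm : ∀ (h : H) (l : Λ) (k : K), actΛH h (actΛK l k) = actΛK (actΛH h l) k)
    -- the right `K`-action on the orbit space `Ω ×_H Λ`, `[ω, λ] • k = [ω, λ • k]`
    (actQ : Quot (orbitRel (diagAct actΩ actΛH)) → K →
      Quot (orbitRel (diagAct actΩ actΛH)))
    (hactQ : ∀ (p : Ω × Λ) (k : K),
      actQ (Quot.mk (orbitRel (diagAct actΩ actΛH)) p) k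
        = Quot.mk (orbitRel (diagAct actΩ actΛH)) (p.1, actΛK p.2 k))
    -- the cutoff functions
    (cΩ : Ω → ℝ) (hcΩ : IsCutoff actΩ cΩ)
    (cΛ : Λ → ℝ) (hcΛ : IsCutoff actΛK cΛ) :
    -- only finitely many nonzero terms
    (∀ p : Ω × Λ, {h : H | cΩ (actΩ p.1 h) * cΛ (actΛH h⁻¹ p.2) ≠ 0}.Finite) ∧
    -- the formula gives a well-defined cutoff function on `Ω ×_H Λ`
    ∃ c : Quot (orbitRel (diagAct actΩ actΛH)) → ℝ,
      (∀ (ω : Ω) (l : Λ), c (Quot.mk (orbitRel (diagAct actΩ actΛH)) (ω, l))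
        = ∑ᶠ h : H, cΩ (actΩ ω h) * cΛ (actΛH h⁻¹ l)) ∧
      IsCutoff actQ c := by
  have hactΩc : ∀ h : H, Continuous fun ω => actΩ ω h := fun h =>
    hactΩ.continuous.comp (by fun_prop : Continuous fun ω : Ω => (ω, h))
  have hactΛc : ∀ k : K, Continuous fun l => actΛK l k := fun k =>
    hactΛK.continuous.comp (by fun_prop : Continuous fun l : Λ => (l, k))
  let r := orbitRel (diagAct actΩ actΛH)
  let f : Ω × Λ → ℝ := fun p => ∑ᶠ h : H, cΩ (actΩ p.1 h) * cΛ (actΛH h⁻¹ p.2)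
  have hdc : ∀ h : H, Continuous fun p => diagAct actΩ actΛH p h := fun h =>
    ((hactΩc h).comp continuous_fst).prodMk ((hΛHcont h⁻¹).comp continuous_snd)
  have hopen : IsOpenMap (Quot.mk r) := by
    refine isOpenMap_quot_orbitRel (fun p => ?_) (fun p g g' => ?_) hdc
    · simp [diagAct, hactΩ.act_one, hΛH1]
    · simp [diagAct, hactΩ.act_mul, ← hΛHmul]
  have hcont : Continuous (Quot.mk r) := continuous_quot_mk
  have hsub : ∀ A : Set Ω, ∀ hA : IsCompact A, ∀ ω ∈ A, ∀ u : H → ℝ,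
      (Function.support fun h : H => cΩ (actΩ ω h) * u h) ⊆
        (hcΩ.finite_return hA).toFinset := by
    intro A hA ω hω u h hh
    simp only [Set.Finite.coe_toFinset, Set.mem_ofPred_eq]
    exact ⟨ω, hω, subset_tsupport _ (left_ne_zero_of_mul hh)⟩
  have hsum : ∀ A : Set Ω, ∀ hA : IsCompact A, ∀ ω ∈ A, ∀ l, f (ω, l) =
      ∑ h ∈ (hcΩ.finite_return hA).toFinset, cΩ (actΩ ω h) * cΛ (actΛH h⁻¹ l) :=
    fun A hA ω hω l => finsum_eq_sum_of_support_subset _ (hsub A hA ω hω _)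
  have hfcont : Continuous f := by
    rw [continuous_iff_continuousAt]
    rintro ⟨ω, l⟩
    obtain ⟨A, hA, hAω⟩ := exists_compact_mem_nhds ω
    have hg : Continuous fun p : Ω × Λ => ∑ h ∈ (hcΩ.finite_return hA).toFinset,
        cΩ (actΩ p.1 h) * cΛ (actΛH h⁻¹ p.2) :=
      continuous_finsetSum _ fun h _ =>
        (hcΩ.1.comp ((hactΩc h).comp continuous_fst)).mul
          (hcΛ.1.comp ((hΛHcont h⁻¹).comp continuous_snd))
    refine hg.continuousAt.congr ?_
    filter_upwards [continuous_fst.continuousAt.preimage_mem_nhds hAω] with p hp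
    exact (hsum A hA p.1 hp p.2).symm
  have hfinv : ∀ p q, r p q → f p = f q := by
    rintro p q ⟨g, rfl⟩
    change _ = ∑ᶠ h : H, cΩ (actΩ (actΩ p.1 g) h) * cΛ (actΛH h⁻¹ (actΛH g⁻¹ p.2))
    simp only [hactΩ.act_mul, ← hΛHmul, ← mul_inv_rev]
    exact (finsum_comp_equiv (Equiv.mulLeft g)
      (f := fun h => cΩ (actΩ p.1 h) * cΛ (actΛH h⁻¹ p.2))).symm
  have hactQc : ∀ k : K, Continuous fun q => actQ q k := by
    intro k
    refine isQuotientMap_quot_mk.continuous_iff.2 ?_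
    have : (fun q => actQ q k) ∘ Quot.mk r = fun p => Quot.mk r (p.1, actΛK p.2 k) :=
      funext fun p => hactQ p k
    rw [this]
    exact hcont.comp (continuous_fst.prodMk ((hactΛc k).comp continuous_snd))
  refine ⟨fun p => ?_, Quot.lift f hfinv, fun ω l => rfl, continuous_quot_lift hfinv hfcont, ?_, ?_, ?_⟩
  · exact (Finset.finite_toSet _).subset
      (hsub {p.1} isCompact_singleton p.1 rfl fun h => cΛ (actΛH h⁻¹ p.2))
  · rintro ⟨p⟩
    exact finsum_nonneg fun h => mul_nonneg (hcΩ.2.1 _) (hcΛ.2.1 _)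
  · rintro ⟨ω, l⟩
    have h1 : ∑ h ∈ (hcΩ.finite_return (isCompact_singleton (x := ω))).toFinset,
        cΩ (actΩ ω h) * 1 = 1 := by
      rw [← finsum_eq_sum_of_support_subset _ (hsub {ω} isCompact_singleton ω rfl fun _ => 1)]
      have hs := hcΩ.2.2.1 ω
      have hfs := (Finset.finite_toSet _).subset
        (hsub {ω} isCompact_singleton ω rfl fun _ => 1)
      simp only [mul_one] at hfs ⊢
      rw [← tsum_eq_finsum (L := .unconditional H) hfs, hs.tsum_eq]
    have h2 : HasSum (fun k : K => ∑ h ∈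
        (hcΩ.finite_return (isCompact_singleton (x := ω))).toFinset,
        cΩ (actΩ ω h) * cΛ (actΛK (actΛH h⁻¹ l) k))
        (∑ h ∈ (hcΩ.finite_return (isCompact_singleton (x := ω))).toFinset,
          cΩ (actΩ ω h) * 1) :=
      hasSum_sum fun h _ => (hcΛ.2.2.1 (actΛH h⁻¹ l)).mul_left _
    rw [h1] at h2
    refine h2.congr_fun ?_
    intro k
    rw [hactQ (ω, l) k]
    change f (ω, actΛK l k) = _
    rw [hsum {ω} isCompact_singleton ω rfl]
    simp only [hcomm]
  · intro C hC
    refine isCutoff_compact_of_finite hactQc hC ?_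
    -- Finiteness is stable under subsets and unions of `C`, so it suffices to find, around each
    -- point, one neighbourhood with this property.
    refine hC.induction_on
      (p := fun s => {k : K | ∃ q ∈ s, actQ q k ∈ tsupport (Quot.lift f hfinv)}.Finite)
      (by simp) ?_ ?_ ?_
    · intro s t hst ht
      exact ht.subset fun k ⟨q, hq, hk⟩ => ⟨q, hst hq, hk⟩
    · intro s t hs ht
      refine (hs.union ht).subset ?_
      rintro k ⟨q, hq | hq, hk⟩
      · exact Or.inl ⟨q, hq, hk⟩
      · exact Or.inr ⟨q, hq, hk⟩
    · rintro ⟨ω, l⟩ -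
      obtain ⟨A, hA, hAω⟩ := exists_compact_mem_nhds ω
      obtain ⟨B, hB, hBl⟩ := exists_compact_mem_nhds l
      refine ⟨Quot.mk r '' (interior A ×ˢ B), mem_nhdsWithin_of_mem_nhds
        (hopen.image_mem_nhds (prod_mem_nhds (interior_mem_nhds.2 hAω) hBl)), ?_⟩
      set F := (hcΩ.finite_return hA).toFinset
      have hfin : (⋃ h ∈ (F : Set H),
          {k : K | ∃ z ∈ actΛH h⁻¹ '' B, actΛK z k ∈ tsupport cΛ}).Finite :=
        F.finite_toSet.biUnion fun h _ => hcΛ.finite_return (hB.image (hΛHcont h⁻¹))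
      refine hfin.subset ?_
      rintro k ⟨_, ⟨⟨ω', l'⟩, ⟨hω', hl'⟩, rfl⟩, hk⟩
      rw [hactQ (ω', l') k] at hk
      have hk1 : (ω', actΛK l' k) ∈ closure (Function.support f) := by
        have := hopen.preimage_closure_eq_closure_preimage hcont
          (Function.support (Quot.lift f hfinv))
        exact this.le hk
      have hk2 : (ω', actΛK l' k) ∈
          closure ((interior A ×ˢ Set.univ) ∩ Function.support f) :=
        (isOpen_interior.prod isOpen_univ).inter_closure ⟨⟨hω', trivial⟩, hk1⟩
      have hclosed : IsClosed (⋃ h ∈ (F : Set H),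
          {p : Ω × Λ | actΛH h⁻¹ p.2 ∈ tsupport cΛ}) :=
        F.finite_toSet.isClosed_biUnion fun h _ =>
          (isClosed_tsupport cΛ).preimage ((hΛHcont h⁻¹).comp continuous_snd)
      have hk3 := closure_minimal (t := ⋃ h ∈ (F : Set H),
          {p : Ω × Λ | actΛH h⁻¹ p.2 ∈ tsupport cΛ}) ?_ hclosed hk2
      · simp only [Set.mem_iUnion, Set.mem_ofPred_eq, exists_prop] at hk3 ⊢
        obtain ⟨h, hh, hm⟩ := hk3
        exact ⟨h, hh, _, ⟨l', hl', rfl⟩, by rwa [← hcomm]⟩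
      · rintro ⟨x, y⟩ ⟨⟨hx, -⟩, hne⟩
        have hne' : f (x, y) ≠ 0 := hne
        rw [hsum A hA x (interior_subset hx) y] at hne'
        obtain ⟨h, hh, hm⟩ := Finset.exists_ne_zero_of_sum_ne_zero hne'
        simp only [Set.mem_iUnion, Set.mem_ofPred_eq, exists_prop]
        exact ⟨h, hh, subset_tsupport _ (right_ne_zero_of_mul hm)⟩
end
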